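/- arXiv:math/0408204 — 3 statements merged into one kernel-verified Lean document; each statement's English description precedes it below -/
import Mathlib

section
/- (Sundquist) Let n ≥ 1 and let x_1,...,x_{2n}, a_1,...,a_{2n} be variables. Then Pf[ (a_i − a_j)/(1 + x_i x_j) ]_{1≤i<j≤2n} = U^n(X;A) / Π_{1≤i<j≤2n}(1 + x_i x_j), where U^n(X;A) = Σ_{λ∈P_n} Σ_{μ∈P_n} a_{λ,μ}(X;A), the sum over pairs of partitions in P_n, the set of partitions of Frobenius form (α_1,...,α_r | α_1+1,...,α_r+1) with α_r ≤ n−1. -/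
open Finset

def pfMatchings (n : ℕ) : Finset (Equiv.Perm (Fin (2 * n))) :=
  Finset.univ.filter (fun σ =>
    (∀ i : Fin n, σ ⟨2 * i.1, by have := i.2; omega⟩ < σ ⟨2 * i.1 + 1, by have := i.2; omega⟩) ∧
    (∀ i j : Fin n, i < j →
      σ ⟨2 * i.1, by have := i.2; omega⟩ < σ ⟨2 * j.1, by have := j.2; omega⟩))

def pf {R : Type*} [CommRing R] {n : ℕ} (A : Matrix (Fin (2 * n)) (Fin (2 * n)) R) : R :=
  ∑ σ ∈ pfMatchings n,
    ((Equiv.Perm.sign σ : ℤ) : R) *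
      ∏ i : Fin n,
        A (σ ⟨2 * i.1, by have := i.2; omega⟩) (σ ⟨2 * i.1 + 1, by have := i.2; omega⟩)

/-- `V^n(X,Y;A,B)`: the determinant of the `2n × 2n` matrix whose `(i,j)` entry
(0-indexed columns) is `a_i x_i^{n−1−j} y_i^j` for `j < n` and
`b_i x_i^{2n−1−j} y_i^{j−n}` for `n ≤ j < 2n`. -/
def Vdet {R : Type*} [CommRing R] (n : ℕ) (x y a b : Fin (2 * n) → R) : R :=
  Matrix.det (Matrix.of fun i j : Fin (2 * n) =>
    if (j : ℕ) < n then a i * x i ^ (n - 1 - (j : ℕ)) * y i ^ (j : ℕ)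
    else b i * x i ^ (2 * n - 1 - (j : ℕ)) * y i ^ ((j : ℕ) - n))


def altDet {R : Type*} [CommRing R] (n : ℕ) (α β : Fin n → ℕ)
    (x a : Fin (2 * n) → R) : R :=
  Matrix.det (Matrix.of fun i j : Fin (2 * n) =>
    if h : (j : ℕ) < n then a i * x i ^ α ⟨j, h⟩
    else x i ^ β ⟨(j : ℕ) - n, by have := j.2; omega⟩)

/-- `𝒫_n`, encoded as antitone functions `Fin n → Fin n` (partitions with at most `n`
parts, each part `≤ n−1`) such that every diagonal hook has leg = arm + 1; i.e.
partitions of Frobenius form `(α₁,…,α_r | α₁+1,…,α_r+1)` fitting in `n` rows. -/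
def frobeniusSet (n : ℕ) : Finset (Fin n → Fin n) :=
  Finset.univ.filter (fun l =>
    (∀ i j : Fin n, i ≤ j → l j ≤ l i) ∧
    ∀ i : Fin n, (i : ℕ) + 1 ≤ (l i : ℕ) →
      (Finset.univ.filter (fun j : Fin n => (i : ℕ) + 1 ≤ (l j : ℕ))).card = (l i : ℕ) + 1)

/-- `U^n(X;A) = Σ_{λ,μ ∈ 𝒫_n} a_{λ+δ, μ+δ}(X;A)` (the alternant convention:
column exponents `λ_j + n − j`, 1-indexed). -/
def Un {R : Type*} [CommRing R] (n : ℕ) (x a : Fin (2 * n) → R) : R :=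
  ∑ lam ∈ frobeniusSet n, ∑ mu ∈ frobeniusSet n,
    altDet n (fun j => (lam j : ℕ) + (n - 1 - (j : ℕ)))
      (fun j => (mu j : ℕ) + (n - 1 - (j : ℕ))) x a


namespace Sund

/-! ### The interlaced and the block labellings of `Fin (2n)` -/

def e1 (n : ℕ) : Fin n × Bool ≃ Fin (2 * n) where
  toFun p := ⟨2 * p.1.1 + (if p.2 then 1 else 0), by have := p.1.2; split_ifs <;> omega⟩
  invFun k := (⟨k.1 / 2, by have := k.2; omega⟩, decide (k.1 % 2 = 1))
  left_inv := by
    rintro ⟨⟨i, hi⟩, b⟩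
    cases b <;> simp <;> omega
  right_inv := by
    rintro ⟨k, hk⟩
    simp only [Fin.mk.injEq]
    by_cases h : k % 2 = 1 <;> simp [h] <;> omega

def e2 (n : ℕ) : Fin n × Bool ≃ Fin (2 * n) where
  toFun p := ⟨p.1.1 + (if p.2 then n else 0), by have := p.1.2; split_ifs <;> omega⟩
  invFun k := (⟨if k.1 < n then k.1 else k.1 - n, by have := k.2; split_ifs <;> omega⟩,
    decide (n ≤ k.1))
  left_inv := by
    rintro ⟨⟨i, hi⟩, b⟩
    cases b <;> simp [hi]
  right_inv := by
    rintro ⟨k, hk⟩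
    simp only [Fin.mk.injEq]
    by_cases h : n ≤ k
    · simp [h, not_lt.mpr h]
    · simp [h, not_le.mp h]

lemma e1_false (n : ℕ) (i : Fin n) :
    e1 n (i, false) = ⟨2 * i.1, by have := i.2; omega⟩ := rfl
lemma e1_true (n : ℕ) (i : Fin n) :
    e1 n (i, true) = ⟨2 * i.1 + 1, by have := i.2; omega⟩ := rfl

/-- the permutation relating the two labellings -/
def piP (n : ℕ) : Equiv.Perm (Fin (2 * n)) := (e1 n).symm.trans (e2 n)

lemma prod_pairs {R : Type*} [CommMonoid R] (n : ℕ) (g : Fin (2 * n) → Fin (2 * n) → R) :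
    ∏ p, ∏ q ∈ Ioi p, g p q =
      ∏ i : Fin n, ∏ j : Fin n,
        ((if i < j then g (e1 n (i, false)) (e1 n (j, false)) else 1) *
         (if i < j then g (e1 n (i, true)) (e1 n (j, true)) else 1) *
         ((if i ≤ j then g (e1 n (i, false)) (e1 n (j, true)) else 1) *
          (if i < j then g (e1 n (i, true)) (e1 n (j, false)) else 1))) := by
  have h : ∀ p, ∏ q ∈ Ioi p, g p q = ∏ q, if p < q then g p q else 1 := by
    intro p
    rw [← Finset.prod_filter]
    congr 1
    ext; simp
  simp_rw [h]
  rw [← (e1 n).prod_comp, Fintype.prod_prod_type]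
  refine Finset.prod_congr rfl fun i _ => ?_
  rw [Fintype.prod_bool, ← (e1 n).prod_comp, ← (e1 n).prod_comp, Fintype.prod_prod_type,
    Fintype.prod_prod_type, ← Finset.prod_mul_distrib]
  refine Finset.prod_congr rfl fun j _ => ?_
  rw [Fintype.prod_bool, Fintype.prod_bool]
  have h1 : (e1 n (i, true) < e1 n (j, true)) ↔ i < j := by
    simp only [e1_true, Fin.lt_def]; omega
  have h2 : (e1 n (i, true) < e1 n (j, false)) ↔ i < j := by
    simp only [e1_true, e1_false, Fin.lt_def]; omega
  have h3 : (e1 n (i, false) < e1 n (j, true)) ↔ i ≤ j := by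
    simp only [e1_true, e1_false, Fin.lt_def, Fin.le_def]; omega
  have h4 : (e1 n (i, false) < e1 n (j, false)) ↔ i < j := by
    simp only [e1_false, Fin.lt_def]; omega
  simp only [h1, h2, h3, h4]
  by_cases hij : i < j
  · simp only [hij, hij.le, if_true]
    ac_rfl
  · simp only [hij, if_false, mul_one, one_mul]

lemma prod_pairs_symm {R : Type*} [CommMonoid R] (n : ℕ) (g : Fin (2 * n) → Fin (2 * n) → R)
    (hg : ∀ p q, g p q = g q p) :
    ∏ p, ∏ q ∈ Ioi p, g p q =
      (∏ i : Fin n, ∏ j ∈ Ioi i, g (e1 n (i, false)) (e1 n (j, false))) *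
      (∏ i : Fin n, ∏ j ∈ Ioi i, g (e1 n (i, true)) (e1 n (j, true))) *
      ∏ i : Fin n, ∏ j : Fin n, g (e1 n (i, false)) (e1 n (j, true)) := by
  rw [prod_pairs]
  simp_rw [Finset.prod_mul_distrib]
  have h : ∀ (f : Fin n → Fin n → R) p, ∏ q ∈ Ioi p, f p q = ∏ q, if p < q then f p q else 1 := by
    intro f p
    rw [← Finset.prod_filter]
    congr 1
    ext; simp
  congr 1
  · congr 1
    · refine Finset.prod_congr rfl fun i _ => (h (fun i j => g (e1 n (i, false)) (e1 n (j, false))) i).symm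
    · refine Finset.prod_congr rfl fun i _ => (h (fun i j => g (e1 n (i, true)) (e1 n (j, true))) i).symm
  · rw [Finset.prod_comm (f := fun i j => if i < j then g (e1 n (i, true)) (e1 n (j, false)) else 1)]
    simp_rw [← Finset.prod_mul_distrib]
    refine Finset.prod_congr rfl fun i _ => Finset.prod_congr rfl fun j _ => ?_
    by_cases hij : i ≤ j
    · simp [hij, not_lt.mpr hij]
    · simp [hij, not_le.mp hij, hg (e1 n (j, true))]

lemma sign_piP (n : ℕ) :
    Equiv.Perm.sign (piP n) = ∏ i : Fin n, ∏ j ∈ Ioi i, (-1) := by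
  rw [Equiv.Perm.sign_eq_prod_prod_Ioi, prod_pairs]
  refine Finset.prod_congr rfl fun i _ => ?_
  have : ∏ j ∈ Ioi i, (-1 : ℤˣ) = ∏ j, if i < j then -1 else 1 := by
    rw [← Finset.prod_filter]
    congr 1
    ext; simp
  rw [this]
  refine Finset.prod_congr rfl fun j _ => ?_
  simp only [piP, Equiv.trans_apply, Equiv.symm_apply_apply]
  have h1 : (e2 n (i, true) < e2 n (j, true)) ↔ i < j := by
    simp only [e2, Equiv.coe_fn_mk, Fin.lt_def, if_true]; omega
  have h2 : ¬ (e2 n (i, true) < e2 n (j, false)) := by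
    simp [e2, Equiv.coe_fn_mk, Fin.lt_def]; omega
  have h3 : (e2 n (i, false) < e2 n (j, true)) := by
    simp [e2, Equiv.coe_fn_mk, Fin.lt_def]; omega
  have h4 : (e2 n (i, false) < e2 n (j, false)) ↔ i < j := by
    simp [e2]
  simp only [h1, h2, h3, h4]
  by_cases hij : i < j <;> simp [hij]

lemma prod_symm_perm {R : Type*} [CommRing R] (N : ℕ) (g : Fin N → Fin N → R)
    (hg : ∀ p q, g p q = g q p) (σ : Equiv.Perm (Fin N)) :
    ∏ p, ∏ q ∈ Ioi p, g (σ p) (σ q) = ∏ p, ∏ q ∈ Ioi p, g p q := by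
  let f : Fin N → Fin N → R := fun i j => if i < j then g i j else if j < i then - g i j else 0
  have hf : ∀ i j, f i j = - f j i := by
    intro i j
    simp only [f]
    rcases lt_trichotomy i j with h | h | h
    · simp [h, h.not_gt, hg i j]
    · simp [h]
    · simp [h, h.not_gt, hg i j]
  have key := σ.prod_Ioi_comp_eq_sign_mul_prod hf
  have h1 : ∏ i, ∏ j ∈ Ioi i, f i j = ∏ p, ∏ q ∈ Ioi p, g p q := by
    refine Finset.prod_congr rfl fun i _ => Finset.prod_congr rfl fun j hj => ?_
    simp [f, Finset.mem_Ioi.mp hj]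
  have h2 : ∏ i, ∏ j ∈ Ioi i, f (σ i) (σ j) =
      ((Equiv.Perm.sign σ : ℤ) : R) * ∏ p, ∏ q ∈ Ioi p, g (σ p) (σ q) := by
    rw [Equiv.Perm.sign_eq_prod_prod_Ioi]
    push_cast
    simp_rw [← Finset.prod_mul_distrib]
    refine Finset.prod_congr rfl fun i _ => Finset.prod_congr rfl fun j hj => ?_
    have hne : σ i ≠ σ j := fun h => (Finset.mem_Ioi.mp hj).ne (σ.injective h)
    simp only [f]
    rcases lt_or_gt_of_ne hne with h | h
    · simp [h]
    · simp [h, h.not_gt]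
  rw [h1, h2] at key
  have hs : ((Equiv.Perm.sign σ : ℤ) : R) * ((Equiv.Perm.sign σ : ℤ) : R) = 1 := by
    rw [← Int.cast_mul, ← Units.val_mul, Int.units_mul_self]; simp
  calc _ = ((Equiv.Perm.sign σ : ℤ) : R) * (((Equiv.Perm.sign σ : ℤ) : R) * ∏ p, ∏ q ∈ Ioi p, g (σ p) (σ q)) := by
        rw [← mul_assoc, hs, one_mul]
    _ = _ := by rw [key, ← mul_assoc, hs, one_mul]

/-! ### Cauchy determinant -/

lemma det_schur {K : Type*} [Field K] (n : ℕ) (M : Matrix (Fin (n+1)) (Fin (n+1)) K)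
    (h : M 0 0 ≠ 0) :
    M.det = M 0 0 * (Matrix.of fun i j : Fin n =>
      M i.succ j.succ - M i.succ 0 * M 0 j.succ / M 0 0).det := by
  let B : Matrix (Fin (n+1)) (Fin (n+1)) K :=
    fun i j => Fin.cases (M 0 j) (fun i' => M i'.succ j - M i'.succ 0 * M 0 j / M 0 0) i
  have hB : M.det = B.det := by
    refine Matrix.det_eq_of_forall_row_eq_smul_add_const
      (fun i => Fin.cases 0 (fun i' => M i'.succ 0 / M 0 0) i) 0 rfl ?_
    intro i j
    refine Fin.cases ?_ (fun i' => ?_) i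
    · simp [B]
    · simp [B]; ring
  rw [hB, Matrix.det_succ_column_zero, Fin.sum_univ_succ]
  have hz : ∀ i : Fin n, B i.succ 0 = 0 := by
    intro i; simp [B, h]
  simp only [hz]
  simp [B]
  left
  rfl

lemma cauchy_entry {K : Type*} [Field K] (a b c d : K) (h1 : 1 + a * c ≠ 0) (h2 : 1 + a * d ≠ 0)
    (h3 : 1 + b * c ≠ 0) (h4 : 1 + b * d ≠ 0) :
    (1 + b * d)⁻¹ - (1 + b * c)⁻¹ * (1 + a * d)⁻¹ / (1 + a * c)⁻¹ =
      (a - b) / (1 + b * c) * ((d - c) / (1 + a * d) * (1 + b * d)⁻¹) := by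
  have h5 : 1 + d * a ≠ 0 := by rwa [mul_comm]
  field_simp
  ring

lemma cauchy {K : Type*} [Field K] : ∀ (n : ℕ) (y z : Fin n → K)
    (_ : ∀ i j, 1 + y i * z j ≠ 0),
    (Matrix.of fun i j => (1 + y i * z j)⁻¹).det * ∏ i, ∏ j, (1 + y i * z j) =
      ∏ i, ∏ j ∈ Ioi i, ((y i - y j) * (z j - z i)) := by
  intro n
  induction n with
  | zero => intro y z _; simp
  | succ n ih =>
    intro y z h
    have ih' := ih (fun i => y i.succ) (fun i => z i.succ) (fun i j => h _ _)
    rw [det_schur _ _ (by simpa using h 0 0)]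
    have hM : (Matrix.of fun i j : Fin n =>
        (Matrix.of fun i j : Fin (n+1) => (1 + y i * z j)⁻¹) i.succ j.succ -
        (Matrix.of fun i j : Fin (n+1) => (1 + y i * z j)⁻¹) i.succ 0 *
        (Matrix.of fun i j : Fin (n+1) => (1 + y i * z j)⁻¹) 0 j.succ /
        (Matrix.of fun i j : Fin (n+1) => (1 + y i * z j)⁻¹) 0 0) =
        Matrix.of fun i j : Fin n => ((y 0 - y i.succ) / (1 + y i.succ * z 0)) *
          (Matrix.of fun i j : Fin n => ((z j.succ - z 0) / (1 + y 0 * z j.succ)) *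
            (Matrix.of fun i j : Fin n => (1 + y i.succ * z j.succ)⁻¹) i j) i j := by
      ext i j
      exact cauchy_entry _ _ _ _ (h _ _) (h _ _) (h _ _) (h _ _)
    rw [hM, Matrix.det_mul_column, Matrix.det_mul_row]
    simp only [Fin.prod_univ_succ, Fin.prod_Ioi_zero, Fin.prod_Ioi_succ, Finset.prod_div_distrib,
      Finset.prod_mul_distrib, Matrix.of_apply]
    simp only [Finset.prod_mul_distrib] at ih'
    have h1 : ∏ i : Fin n, (1 + y i.succ * z 0) ≠ 0 := Finset.prod_ne_zero_iff.mpr fun i _ => h _ _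
    have h2 : ∏ i : Fin n, (1 + y 0 * z i.succ) ≠ 0 := Finset.prod_ne_zero_iff.mpr fun i _ => h _ _
    have h3 := h 0 0
    generalize (Matrix.of fun i j : Fin n => (1 + y i.succ * z j.succ)⁻¹).det = d at *
    generalize ∏ i : Fin n, ∏ j : Fin n, (1 + y i.succ * z j.succ) = P at *
    generalize ∏ i : Fin n, (1 + y i.succ * z 0) = P1 at *
    generalize ∏ i : Fin n, (1 + y 0 * z i.succ) = P2 at *
    generalize (1 + y 0 * z 0) = P3 at *
    field_simp
    rw [mul_assoc, ih']
    ring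

end Sund

namespace Sund

/-! ### The alternating sum over `frobeniusSet` -/

def liftZero (n : ℕ) (l : Fin n → Fin n) : Fin (n+1) → Fin (n+1) :=
  Fin.snoc (α := fun _ => Fin (n+1)) (fun j => (l j).castSucc) 0

def liftTop (n : ℕ) (l : Fin n → Fin n) : Fin (n+1) → Fin (n+1) :=
  Fin.cons (α := fun _ => Fin (n+1)) (Fin.last n) (fun j => (l j).succ)

lemma mem_frob (n : ℕ) (l : Fin n → Fin n) : l ∈ frobeniusSet n ↔
    (∀ i j : Fin n, i ≤ j → l j ≤ l i) ∧
    ∀ i : Fin n, (i : ℕ) + 1 ≤ (l i : ℕ) →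
      (Finset.univ.filter (fun j : Fin n => (i : ℕ) + 1 ≤ (l j : ℕ))).card = (l i : ℕ) + 1 := by
  simp [frobeniusSet]

lemma card_snoc (n : ℕ) (l : Fin n → Fin n) (k : ℕ) :
    (Finset.univ.filter (fun j : Fin (n+1) => k + 1 ≤ (liftZero n l j : ℕ))).card =
    (Finset.univ.filter (fun j : Fin n => k + 1 ≤ (l j : ℕ))).card := by
  simp only [Finset.card_filter]
  rw [Fin.sum_univ_castSucc]
  simp [liftZero]

lemma card_cons (n : ℕ) (l : Fin n → Fin n) (k : ℕ) :
    (Finset.univ.filter (fun j : Fin (n+1) => k + 1 ≤ (liftTop n l j : ℕ))).card =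
    (if k + 1 ≤ n then 1 else 0) +
    (Finset.univ.filter (fun j : Fin n => k ≤ (l j : ℕ))).card := by
  simp only [Finset.card_filter]
  rw [Fin.sum_univ_succ]
  simp [liftTop]

lemma liftZero_mem (n : ℕ) (l : Fin n → Fin n) :
    liftZero n l ∈ frobeniusSet (n+1) ↔ l ∈ frobeniusSet n := by
  rw [mem_frob, mem_frob]
  simp only [card_snoc]
  constructor
  · rintro ⟨h1, h2⟩
    refine ⟨fun i j hij => ?_, fun i hi => ?_⟩
    · simpa [liftZero] using h1 i.castSucc j.castSucc (by simpa using hij)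
    · simpa [liftZero] using h2 i.castSucc (by simpa [liftZero] using hi)
  · rintro ⟨h1, h2⟩
    refine ⟨fun i j => ?_, fun i => ?_⟩
    · refine Fin.lastCases ?_ (fun j => ?_) j
      · intro _; simp [liftZero]
      · refine Fin.lastCases ?_ (fun i => ?_) i
        · intro h; exact absurd h (by simp [Fin.lt_def])
        · intro h; simpa [liftZero] using h1 i j (by simpa using h)
    · refine Fin.lastCases ?_ (fun i => ?_) i
      · simp [liftZero]
      · intro h; simpa [liftZero] using h2 i (by simpa [liftZero] using h)

lemma liftTop_mem (n : ℕ) (l : Fin n → Fin n) :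
    liftTop n l ∈ frobeniusSet (n+1) ↔ l ∈ frobeniusSet n := by
  rw [mem_frob, mem_frob]
  simp only [card_cons]
  constructor
  · rintro ⟨h1, h2⟩
    refine ⟨fun i j hij => ?_, fun i hi => ?_⟩
    · simpa [liftTop] using h1 i.succ j.succ (by simpa using hij)
    · have := h2 i.succ (by simpa [liftTop] using hi)
      have h3 := (l i).2
      rw [if_pos (by simp; omega)] at this
      simp only [liftTop, Fin.cons_succ, Fin.val_succ] at this
      omega
  · rintro ⟨h1, h2⟩
    refine ⟨fun i j => ?_, fun i => ?_⟩
    · refine Fin.cases ?_ (fun i => ?_) i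
      · intro _; simp [liftTop, Fin.le_last]
      · refine Fin.cases ?_ (fun j => ?_) j
        · intro h; exact absurd h (by simp)
        · intro h; simpa [liftTop] using h1 i j (by simpa using h)
    · refine Fin.cases ?_ (fun i => ?_) i
      · intro h
        simp [liftTop] at h ⊢
        rw [if_pos h]; omega
      · intro h
        have h' : (i : ℕ) + 1 ≤ l i := by simpa [liftTop] using h
        have h3 := (l i).2
        rw [if_pos (by simp; omega)]
        have := h2 i h'
        simp only [liftTop, Fin.cons_succ, Fin.val_succ]
        omega

lemma frob_succ (n : ℕ) (hn : 1 ≤ n) (l : Fin (n+1) → Fin (n+1)) (hl : l ∈ frobeniusSet (n+1)) :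
    (∃ m, liftZero n m = l) ∨ (∃ m, liftTop n m = l) := by
  obtain ⟨h1, h2⟩ := (mem_frob _ _).1 hl
  by_cases hz : l (Fin.last n) = 0
  · left
    have h0 : (l 0 : ℕ) < n := by
      by_contra hcon
      have hc := h2 0 (by simp; omega)
      have : (Finset.univ.filter (fun j : Fin (n+1) => ((0 : Fin (n+1)) : ℕ) + 1 ≤ (l j : ℕ))) ⊆
          Finset.univ.erase (Fin.last n) := by
        intro j hj
        simp only [Finset.mem_filter, Finset.mem_univ, true_and] at hj
        simp only [Finset.mem_erase, Finset.mem_univ, and_true]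
        rintro rfl
        rw [hz] at hj
        simp at hj
      have := Finset.card_le_card this
      rw [hc] at this
      simp at this
      omega
    refine ⟨fun j => ⟨l j.castSucc, lt_of_le_of_lt (Fin.le_def.1 (h1 0 j.castSucc (Fin.zero_le _))) h0⟩, ?_⟩
    funext j
    refine Fin.lastCases ?_ (fun j => ?_) j
    · simp [liftZero, hz]
    · simp [liftZero]
  · right
    have hpos : ∀ j, 1 ≤ (l j : ℕ) := by
      intro j
      have := Fin.le_def.1 (h1 j (Fin.last n) (Fin.le_last _))
      have h3 : (l (Fin.last n) : ℕ) ≠ 0 := fun h => hz (Fin.ext h)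
      omega
    have h0 : (l 0 : ℕ) = n := by
      have := h2 0 (by simpa using hpos 0)
      rw [Finset.filter_true_of_mem (by intro j _; simpa using hpos j)] at this
      simp at this
      omega
    refine ⟨fun j => ⟨l j.succ - 1, by have := (l j.succ).2; have := hpos j.succ; omega⟩, ?_⟩
    funext j
    refine Fin.cases ?_ (fun j => ?_) j
    · simp [liftTop, Fin.ext_iff, h0]
    · have := hpos j.succ
      simp [liftTop, Fin.ext_iff]
      omega

lemma liftZero_inj (n : ℕ) : Function.Injective (liftZero n) := by
  intro l m h
  funext j
  have := congrFun h j.castSucc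
  simpa [liftZero] using this

lemma liftTop_inj (n : ℕ) : Function.Injective (liftTop n) := by
  intro l m h
  funext j
  have := congrFun h j.succ
  simpa [liftTop] using this

lemma sum_frob_succ {M : Type*} [AddCommMonoid M] (n : ℕ) (hn : 1 ≤ n)
    (φ : (Fin (n+1) → Fin (n+1)) → M) :
    ∑ l ∈ frobeniusSet (n+1), φ l =
      ∑ l ∈ frobeniusSet n, φ (liftZero n l) + ∑ l ∈ frobeniusSet n, φ (liftTop n l) := by
  classical
  have hset : frobeniusSet (n+1) = (frobeniusSet n).image (liftZero n) ∪
      (frobeniusSet n).image (liftTop n) := by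
    ext l
    simp only [Finset.mem_union, Finset.mem_image]
    constructor
    · intro hl
      rcases frob_succ n hn l hl with ⟨m, rfl⟩ | ⟨m, rfl⟩
      · exact Or.inl ⟨m, (liftZero_mem n m).1 hl, rfl⟩
      · exact Or.inr ⟨m, (liftTop_mem n m).1 hl, rfl⟩
    · rintro (⟨m, hm, rfl⟩ | ⟨m, hm, rfl⟩)
      · exact (liftZero_mem n m).2 hm
      · exact (liftTop_mem n m).2 hm
  have hd : Disjoint ((frobeniusSet n).image (liftZero n)) ((frobeniusSet n).image (liftTop n)) := by
    rw [Finset.disjoint_left]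
    intro l hl hl'
    obtain ⟨m, _, rfl⟩ := Finset.mem_image.1 hl
    obtain ⟨m', _, h⟩ := Finset.mem_image.1 hl'
    have := congrFun h (Fin.last n)
    obtain ⟨k, rfl⟩ : ∃ k, n = k + 1 := ⟨n - 1, by omega⟩
    rw [← Fin.succ_last] at this
    simp only [liftTop, Fin.cons_succ] at this
    rw [Fin.succ_last] at this
    simp [liftZero] at this
  rw [hset, Finset.sum_union hd, Finset.sum_image (fun _ _ _ _ h => liftZero_inj n h),
    Finset.sum_image (fun _ _ _ _ h => liftTop_inj n h)]

/-- the reduced columns -/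
def pcol {M : Type*} [AddCommGroup M] (m : ℕ) (v : ℕ → M) (j : ℕ) : M :=
  v (m - j) + if j = 0 then 0 else (-1 : ℤ) ^ j • v (m + j)

lemma alt_snoc {R M : Type*} [CommRing R] [AddCommGroup M] [Module R M] (n : ℕ)
    (f : M [⋀^Fin (n+1)]→ₗ[R] R) (u : Fin n → M) (w : M) :
    f (Fin.snoc (α := fun _ => M) u w) = (-1 : ℤ) ^ n • f (Fin.cons (α := fun _ => M) w u) := by
  rw [Fin.snoc_eq_cons_rotate]
  have := f.map_perm (Fin.cons (α := fun _ => M) w u) (finRotate (n+1))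
  rw [sign_finRotate] at this
  simp only [Function.comp_def] at this
  rw [this]
  simp [Units.smul_def]

lemma frob_alt {R M : Type*} [CommRing R] [AddCommGroup M] [Module R M] (k : ℕ) :
    ∀ (f : M [⋀^Fin (k+1)]→ₗ[R] R) (v : ℕ → M),
    ∑ l ∈ frobeniusSet (k+1), f (fun j => v ((l j : ℕ) + ((k + 1) - 1 - (j : ℕ)))) =
      f (fun j => pcol k v j) := by
  induction k with
  | zero =>
    intro f v
    have : frobeniusSet (0+1) = {fun _ => 0} := by decide
    rw [this]
    simp only [Finset.sum_singleton]
    congr 1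
    funext j
    obtain rfl : j = 0 := Fin.ext (by have := j.2; simp at this ⊢)
    simp [pcol]
  | succ k ih =>
    intro f v
    rw [sum_frob_succ _ (by omega)]
    have hz : ∀ l : Fin (k+1) → Fin (k+1),
        (fun j : Fin (k+1+1) => v ((liftZero (k+1) l j : ℕ) + (k + 1 + 1 - 1 - (j : ℕ)))) =
        Fin.snoc (α := fun _ => M)
          (fun j => (fun e => v (e+1)) ((l j : ℕ) + (k + 1 - 1 - (j : ℕ)))) (v 0) := by
      intro l
      funext j
      refine Fin.lastCases ?_ (fun j => ?_) j
      · simp [liftZero]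
      · simp only [liftZero, Fin.snoc_castSucc, Fin.val_castSucc]
        congr 1
        have := j.2
        omega
    have ht : ∀ l : Fin (k+1) → Fin (k+1),
        (fun j : Fin (k+1+1) => v ((liftTop (k+1) l j : ℕ) + (k + 1 + 1 - 1 - (j : ℕ)))) =
        Fin.cons (α := fun _ => M) (v (2 * (k + 1)))
          (fun j => (fun e => v (e+1)) ((l j : ℕ) + (k + 1 - 1 - (j : ℕ)))) := by
      intro l
      funext j
      refine Fin.cases ?_ (fun j => ?_) j
      · simp [liftTop]; congr 1; omega
      · simp only [liftTop, Fin.cons_succ, Fin.val_succ]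
        congr 1
        have := j.2
        omega
    simp_rw [hz, ht, alt_snoc]
    rw [← Finset.smul_sum]
    have ih0 := ih (f.curryLeft (v 0)) (fun e => v (e+1))
    have ih1 := ih (f.curryLeft (v (2 * (k+1)))) (fun e => v (e+1))
    simp only [AlternatingMap.curryLeft_apply_apply] at ih0 ih1
    simp only [Matrix.vecCons] at ih0 ih1
    rw [ih0, ih1]
    have hp : (fun j : Fin (k+1+1) => pcol (k+1) v j) =
        Fin.snoc (α := fun _ => M) (fun j : Fin (k+1) => pcol k (fun e => v (e+1)) j)
          (pcol (k+1) v (k+1)) := by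
      funext j
      refine Fin.lastCases ?_ (fun j => ?_) j
      · simp
      · simp only [Fin.snoc_castSucc, Fin.val_castSucc, pcol]
        have := j.2
        rw [show k + 1 - (j : ℕ) = k - j + 1 by omega, show k + 1 + (j : ℕ) = k + j + 1 by omega]
    rw [hp, alt_snoc]
    have hlin := (f.curryLeft).map_add (v 0) ((-1 : ℤ) ^ (k+1) • v (2 * (k+1)))
    have hlin2 := (f.curryLeft).toAddMonoidHom.map_zsmul ((-1 : ℤ) ^ (k+1)) (v (2 * (k+1)))
    have hq : pcol (k+1) v (k+1) = v 0 + (-1 : ℤ) ^ (k+1) • v (2 * (k+1)) := by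
      simp [pcol, two_mul]
    rw [hq]
    have e : ∀ (w : M) u, f (Fin.cons (α := fun _ => M) w u) = f.curryLeft w u := fun w u => rfl
    simp only [e]
    rw [hlin]
    simp only [LinearMap.toAddMonoidHom_coe] at hlin2
    rw [hlin2]
    simp only [AlternatingMap.add_apply, smul_add]
    congr 1
    rw [AlternatingMap.smul_apply, smul_smul, ← mul_pow]
    simp

/-! ### The reduced columns give the projective Vandermonde -/

def cc : ℕ → ℕ → ℤ
  | 0, k => if k = 0 then 2 else 0
  | 1, k => if k = 1 then 1 else 0
  | (j+2), k => (if k = 0 then 0 else cc (j+1) (k-1)) + cc j k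

lemma cc_gt : ∀ j k, j < k → cc j k = 0
  | 0, k, h => by simp [cc]; omega
  | 1, k, h => by simp [cc]; omega
  | (j+2), k, h => by
    rw [cc, cc_gt j k (by omega), if_neg (by omega), cc_gt (j+1) (k-1) (by omega)]; simp

lemma cc_diag : ∀ j, 1 ≤ j → cc j j = 1
  | 0, h => by omega
  | 1, _ => by simp [cc]
  | (j+2), _ => by
    rw [cc, cc_gt j (j+2) (by omega), if_neg (by omega)]
    simpa using cc_diag (j+1) (by omega)

lemma cc_sum {R : Type*} [CommRing R] (x : R) : ∀ j, 1 + (-1) ^ j * x ^ (2 * j) =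
    ∑ k ∈ range (j+1), (cc j k : R) * (x ^ (j - k) * (1 - x ^ 2) ^ k)
  | 0 => by simp [cc]; norm_num
  | 1 => by simp [cc, Finset.sum_range_succ]; ring
  | (j+2) => by
    have h1 := cc_sum x (j+1)
    have h0 := cc_sum x j
    have e1 : ∑ k ∈ range (j+2+1), (cc (j+2) k : R) * (x ^ (j + 2 - k) * (1 - x ^ 2) ^ k) =
        (1 - x^2) * (∑ k ∈ range (j+1+1), (cc (j+1) k : R) * (x ^ (j + 1 - k) * (1 - x ^ 2) ^ k)) +
        x ^ 2 * (∑ k ∈ range (j+1), (cc j k : R) * (x ^ (j - k) * (1 - x ^ 2) ^ k)) := by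
      have : ∀ k, (cc (j+2) k : R) * (x ^ (j + 2 - k) * (1 - x ^ 2) ^ k) =
          ((if k = 0 then 0 else cc (j+1) (k-1) : ℤ) : R) * (x ^ (j + 2 - k) * (1 - x ^ 2) ^ k) +
          (cc j k : R) * (x ^ (j + 2 - k) * (1 - x ^ 2) ^ k) := by
        intro k
        rw [cc]; push_cast; ring
      simp_rw [this]
      rw [Finset.sum_add_distrib]
      congr 1
      · rw [Finset.sum_range_succ']
        simp only [Nat.add_eq_zero_iff, one_ne_zero, and_false, if_false, if_true, Nat.add_sub_cancel,
          Int.cast_zero, zero_mul, add_zero]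
        rw [Finset.mul_sum]
        refine Finset.sum_congr rfl fun k hk => ?_
        rw [show j + 2 - (k + 1) = j + 1 - k by omega]
        ring
      · rw [Finset.sum_range_succ, Finset.sum_range_succ, cc_gt j (j+2) (by omega),
          cc_gt j (j+1) (by omega)]
        simp only [Int.cast_zero, zero_mul, add_zero]
        rw [Finset.mul_sum]
        refine Finset.sum_congr rfl fun k hk => ?_
        rw [show j + 2 - k = 2 + (j - k) by have := Finset.mem_range.1 hk; omega, pow_add]
        ring
    rw [e1, ← h1, ← h0]
    ring

def cm (j k : ℕ) : ℤ := if j = 0 then (if k = 0 then 1 else 0) else cc j k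

lemma pcol_pow {R : Type*} [CommRing R] (x : R) (m j : ℕ) (hj : j ≤ m) :
    pcol m (fun e => x ^ e) j =
      ∑ k ∈ range (m+1), x ^ (m - k) * (1 - x ^ 2) ^ k * (cm j k : R) := by
  have hz : ∀ k, j < k → cm j k = 0 := by
    intro k hk
    unfold cm
    split_ifs
    · omega
    · rfl
    · exact cc_gt _ _ hk
  have e : ∑ k ∈ range (m+1), x ^ (m - k) * (1 - x ^ 2) ^ k * (cm j k : R) =
      ∑ k ∈ range (j+1), x ^ (m - k) * (1 - x ^ 2) ^ k * (cm j k : R) := by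
    symm
    apply Finset.sum_subset
    · intro k; simp; omega
    · intro k _ hk
      rw [hz k (by simpa using hk)]; simp
  rw [e]
  by_cases h : j = 0
  · subst h
    simp [pcol, cm]
  · have := cc_sum x j
    have e2 : pcol m (fun e => x ^ e) j = x ^ (m - j) * (1 + (-1) ^ j * x ^ (2 * j)) := by
      simp only [pcol, if_neg h]
      rw [show m + j = (m - j) + 2 * j by omega, pow_add]
      simp
      ring
    rw [e2, this, Finset.mul_sum]
    refine Finset.sum_congr rfl fun k hk => ?_
    rw [show m - k = (m - j) + (j - k) by have := Finset.mem_range.1 hk; omega, pow_add, cm, if_neg h]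
    ring

lemma det_pcol {R : Type*} [CommRing R] (m : ℕ) (y : Fin (m+1) → R) :
    (Matrix.of fun i j : Fin (m+1) => pcol m (fun e => y i ^ e) (j : ℕ)).det =
      ∏ i, ∏ j ∈ Ioi i, ((y i - y j) * (1 + y i * y j)) := by
  let C : Matrix (Fin (m+1)) (Fin (m+1)) R := Matrix.of fun k j => (cm j k : R)
  have hC : C.det = 1 := by
    rw [Matrix.det_of_isUpperTriangular]
    · apply Finset.prod_eq_one
      intro j _
      simp only [C, Matrix.of_apply, cm]
      split_ifs with h
      · simp
      · rw [cc_diag _ (by omega)]; simp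
    · intro k j hjk
      have hjk' : (j : ℕ) < k := hjk
      simp only [C, Matrix.of_apply, cm]
      split_ifs with h h'
      · omega
      · simp
      · rw [cc_gt _ _ hjk']; simp
  have hM : (Matrix.of fun i j : Fin (m+1) => pcol m (fun e => y i ^ e) (j : ℕ)) =
      Matrix.projVandermonde (fun i => 1 - y i ^ 2) y * C := by
    ext i j
    rw [Matrix.mul_apply, Matrix.of_apply, pcol_pow _ _ _ (by omega), Finset.sum_range]
    refine Finset.sum_congr rfl fun k _ => ?_
    simp only [Matrix.projVandermonde_apply, C, Matrix.of_apply, Fin.val_rev]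
    rw [show m + 1 - ((k : ℕ) + 1) = m - k by omega]
    ring
  rw [hM, Matrix.det_mul, hC, mul_one, Matrix.det_projVandermonde]
  refine Finset.prod_congr rfl fun i _ => Finset.prod_congr rfl fun j _ => ?_
  ring

lemma littlewood {R : Type*} [CommRing R] (n : ℕ) (hn : 1 ≤ n) (y : Fin n → R) :
    ∑ l ∈ frobeniusSet n, (Matrix.of fun i j : Fin n => y i ^ ((l j : ℕ) + (n - 1 - (j : ℕ)))).det =
      ∏ i, ∏ j ∈ Ioi i, ((y i - y j) * (1 + y i * y j)) := by
  obtain ⟨m, rfl⟩ : ∃ m, n = m + 1 := ⟨n - 1, by omega⟩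
  rw [← det_pcol]
  have := frob_alt (R := R) m (Matrix.detRowAlternating (n := Fin (m+1)) (R := R))
    (fun e i => y i ^ e)
  rw [← Matrix.det_transpose (Matrix.of fun i j : Fin (m+1) => pcol m (fun e => y i ^ e) (j : ℕ))]
  simp_rw [← Matrix.det_transpose (Matrix.of fun i j : Fin (m+1) => y i ^ _)]
  refine Eq.trans ?_ (this.trans ?_)
  · rfl
  change Matrix.det _ = Matrix.det _
  congr 1
  ext i j
  simp [pcol, Matrix.transpose_apply]
  split_ifs <;> simp

end Sund

namespace Sund

/-! ### Sums over all permutations -/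

lemma sign_sq {R : Type*} [CommRing R] {α : Type*} [Fintype α] [DecidableEq α]
    (σ : Equiv.Perm α) :
    ((Equiv.Perm.sign σ : ℤ) : R) * ((Equiv.Perm.sign σ : ℤ) : R) = 1 := by
  rw [← Int.cast_mul, ← Units.val_mul, Int.units_mul_self]; simp

/-- transport a permutation of the labels -/
def hat (n : ℕ) (g : Equiv.Perm (Fin n × Bool)) : Equiv.Perm (Fin (2 * n)) := (e1 n).permCongr g

lemma hat_apply (n : ℕ) (g : Equiv.Perm (Fin n × Bool)) (p) : hat n g (e1 n p) = e1 n (g p) := by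
  simp [hat, Equiv.permCongr_apply]

lemma sign_hat (n : ℕ) (g : Equiv.Perm (Fin n × Bool)) :
    Equiv.Perm.sign (hat n g) = Equiv.Perm.sign g := by
  simp [hat]

/-- swap inside the pairs where `ε` is true -/
def sw (n : ℕ) (ε : Fin n → Bool) : Equiv.Perm (Fin n × Bool) :=
  Equiv.prodCongrRight fun i => if ε i then Equiv.swap false true else 1

lemma sw_false (n : ℕ) (ε : Fin n → Bool) (i) : sw n ε (i, false) = (i, ε i) := by
  cases h : ε i <;> simp [sw, h]

lemma sw_true (n : ℕ) (ε : Fin n → Bool) (i) : sw n ε (i, true) = (i, !ε i) := by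
  cases h : ε i <;> simp [sw, h]

lemma sign_sw (n : ℕ) (ε : Fin n → Bool) :
    Equiv.Perm.sign (sw n ε) = ∏ i, if ε i then -1 else 1 := by
  rw [sw, Equiv.Perm.sign_prodCongrRight]
  refine Finset.prod_congr rfl fun i _ => ?_
  cases h : ε i <;> simp

/-- independent permutations of the first and of the second entries of the pairs -/
def two (n : ℕ) (τ ρ : Equiv.Perm (Fin n)) : Equiv.Perm (Fin n × Bool) :=
  Equiv.prodCongrLeft fun b => if b then ρ else τ

lemma two_false (n : ℕ) (τ ρ : Equiv.Perm (Fin n)) (i) : two n τ ρ (i, false) = (τ i, false) := by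
  simp [two]

lemma two_true (n : ℕ) (τ ρ : Equiv.Perm (Fin n)) (i) : two n τ ρ (i, true) = (ρ i, true) := by
  simp [two]

lemma two_apply (n : ℕ) (τ : Equiv.Perm (Fin n)) (p) : two n τ τ p = (τ p.1, p.2) := by
  rcases p with ⟨i, b⟩; cases b
  · rw [two_false]
  · rw [two_true]

lemma sign_two (n : ℕ) (τ ρ : Equiv.Perm (Fin n)) :
    Equiv.Perm.sign (two n τ ρ) = Equiv.Perm.sign τ * Equiv.Perm.sign ρ := by
  rw [two, Equiv.Perm.sign_prodCongrLeft, Fintype.prod_bool]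
  simp [mul_comm]

lemma sum_hat {M : Type*} [AddCommMonoid M] (n : ℕ) (g : Equiv.Perm (Fin n × Bool))
    (φ : Equiv.Perm (Fin (2 * n)) → M) : ∑ σ, φ (σ * hat n g) = ∑ σ, φ σ :=
  Equiv.sum_comp (Equiv.mulRight (hat n g)) φ

lemma mul_hat (n : ℕ) (σ : Equiv.Perm (Fin (2 * n))) (g : Equiv.Perm (Fin n × Bool)) (p) :
    (σ * hat n g) (e1 n p) = σ (e1 n (g p)) := by
  rw [Equiv.Perm.mul_apply, hat_apply]

lemma sign_mul_hat {R : Type*} [CommRing R] (n : ℕ) (σ : Equiv.Perm (Fin (2 * n)))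
    (g : Equiv.Perm (Fin n × Bool)) :
    ((Equiv.Perm.sign (σ * hat n g) : ℤ) : R) =
      ((Equiv.Perm.sign σ : ℤ) : R) * ((Equiv.Perm.sign g : ℤ) : R) := by
  rw [Equiv.Perm.sign_mul, sign_hat]; push_cast; rfl

/-- the full group of symmetries of the pairs -/
def gg (n : ℕ) (g : (Fin n → Bool) × Equiv.Perm (Fin n)) : Equiv.Perm (Fin n × Bool) :=
  two n g.2 g.2 * sw n g.1

lemma gg_false (n : ℕ) (g) (i) : gg n g (i, false) = (g.2 i, g.1 i) := by
  rw [gg, Equiv.Perm.mul_apply, sw_false, two_apply]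

lemma gg_true (n : ℕ) (g) (i) : gg n g (i, true) = (g.2 i, !g.1 i) := by
  rw [gg, Equiv.Perm.mul_apply, sw_true, two_apply]

lemma sign_gg (n : ℕ) (g) : Equiv.Perm.sign (gg n g) = ∏ i, if g.1 i then -1 else 1 := by
  rw [gg, Equiv.Perm.sign_mul, sign_two, Int.units_mul_self, one_mul, sign_sw]

lemma mem_pfM (n : ℕ) (σ : Equiv.Perm (Fin (2 * n))) : σ ∈ pfMatchings n ↔
    (∀ i, σ (e1 n (i, false)) < σ (e1 n (i, true))) ∧
    StrictMono fun i => σ (e1 n (i, false)) := by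
  simp only [pfMatchings, Finset.mem_filter, Finset.mem_univ, true_and]
  rfl

lemma existsUnique_gg (n : ℕ) (σ : Equiv.Perm (Fin (2 * n))) :
    ∃! g, σ * hat n (gg n g) ∈ pfMatchings n := by
  have hinj : ∀ p q, σ (e1 n p) = σ (e1 n q) → p = q := fun p q h =>
    (e1 n).injective (σ.injective h)
  let m : Fin n → Fin (2 * n) := fun i => min (σ (e1 n (i, false))) (σ (e1 n (i, true)))
  have hm : Function.Injective m := by
    intro i j h
    simp only [m] at h
    rcases min_choice (σ (e1 n (i, false))) (σ (e1 n (i, true))) with h1 | h1 <;>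
    rcases min_choice (σ (e1 n (j, false))) (σ (e1 n (j, true))) with h2 | h2 <;>
    · rw [h1, h2] at h
      exact congrArg Prod.fst (hinj _ _ h)
  have key : ∀ g, σ * hat n (gg n g) ∈ pfMatchings n ↔
      (∀ i, g.1 i = decide (σ (e1 n (g.2 i, true)) < σ (e1 n (g.2 i, false)))) ∧
      StrictMono (m ∘ g.2) := by
    intro g
    rw [mem_pfM]
    simp only [mul_hat, gg_false, gg_true]
    have h1 : ∀ i, σ (e1 n (g.2 i, g.1 i)) < σ (e1 n (g.2 i, !g.1 i)) ↔
        g.1 i = decide (σ (e1 n (g.2 i, true)) < σ (e1 n (g.2 i, false))) := by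
      intro i
      have hne : σ (e1 n (g.2 i, true)) ≠ σ (e1 n (g.2 i, false)) := by
        intro h; have := hinj _ _ h; simp at this
      cases hb : g.1 i
      · simp only [Bool.not_false]
        rw [eq_comm, decide_eq_false_iff_not, not_lt]
        exact ⟨le_of_lt, fun h => lt_of_le_of_ne h hne.symm⟩
      · simp only [Bool.not_true]
        rw [eq_comm, decide_eq_true_iff]
    simp only [h1]
    refine and_congr_right fun h => ?_
    have : (fun i => σ (e1 n (g.2 i, g.1 i))) = m ∘ g.2 := by
      funext i
      have hlt := (h1 i).2 (h i)
      simp only [Function.comp, m]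
      cases hb : g.1 i
      · rw [hb] at hlt; exact (min_eq_left hlt.le).symm
      · rw [hb] at hlt; exact (min_eq_right hlt.le).symm
    rw [this]
  simp only [key]
  refine ⟨(fun i => decide (σ (e1 n (Tuple.sort m i, true)) < σ (e1 n (Tuple.sort m i, false))),
    Tuple.sort m), ⟨fun i => rfl, ?_⟩, ?_⟩
  · exact (Tuple.monotone_sort m).strictMono_of_injective (hm.comp (Tuple.sort m).injective)
  · rintro ⟨ε, τ⟩ ⟨h1, h2⟩
    have h3 := Tuple.unique_monotone h2.monotone (Tuple.monotone_sort m)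
    have h4 : τ = Tuple.sort m := Equiv.ext fun i => hm (congrFun h3 i)
    simp only at h1
    subst h4
    simp only [Prod.mk.injEq, and_true]
    funext i
    exact h1 i

lemma pf_eq {R : Type*} [CommRing R] (n : ℕ) (B : Matrix (Fin (2 * n)) (Fin (2 * n)) R) :
    pf B = ∑ σ ∈ pfMatchings n, ((Equiv.Perm.sign σ : ℤ) : R) *
      ∏ i, B (σ (e1 n (i, false))) (σ (e1 n (i, true))) := rfl

lemma pf_sum {R : Type*} [CommRing R] (n : ℕ) (B : Matrix (Fin (2 * n)) (Fin (2 * n)) R)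
    (hB : ∀ i j, B i j = - B j i) :
    ((2 ^ n * n.factorial : ℕ) : R) * pf B = ∑ σ, ((Equiv.Perm.sign σ : ℤ) : R) *
      ∏ i, B (σ (e1 n (i, false))) (σ (e1 n (i, true))) := by
  classical
  set φ : Equiv.Perm (Fin (2 * n)) → R := fun σ => ((Equiv.Perm.sign σ : ℤ) : R) *
      ∏ i, B (σ (e1 n (i, false))) (σ (e1 n (i, true))) with hφ
  have inv : ∀ σ g, φ (σ * hat n (gg n g)) = φ σ := by
    intro σ g
    simp only [hφ, sign_mul_hat, mul_hat, gg_false, gg_true, sign_gg]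
    rw [mul_assoc]
    congr 1
    rw [← Equiv.prod_comp g.2 (fun i => B (σ (e1 n (i, false))) (σ (e1 n (i, true))))]
    push_cast
    rw [← Finset.prod_mul_distrib]
    refine Finset.prod_congr rfl fun i _ => ?_
    cases hb : g.1 i
    · simp
    · simp only [Bool.not_true, if_true]
      rw [hB (σ (e1 n (g.2 i, true)))]
      simp
  have h1 : ∑ g : (Fin n → Bool) × Equiv.Perm (Fin n), ∑ σ,
      (if σ * hat n (gg n g) ∈ pfMatchings n then φ (σ * hat n (gg n g)) else 0) =
      ((2 ^ n * n.factorial : ℕ) : R) * pf B := by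
    have : ∀ g : (Fin n → Bool) × Equiv.Perm (Fin n), ∑ σ,
      (if σ * hat n (gg n g) ∈ pfMatchings n then φ (σ * hat n (gg n g)) else 0) = pf B := by
      intro g
      rw [sum_hat n (gg n g) (fun σ => if σ ∈ pfMatchings n then φ σ else 0),
        Finset.sum_ite_mem, Finset.univ_inter, pf_eq]
    simp_rw [this]
    rw [Finset.sum_const, Finset.card_univ, Fintype.card_prod, Fintype.card_perm, nsmul_eq_mul]
    simp
  rw [← h1, Finset.sum_comm]
  refine Finset.sum_congr rfl fun σ _ => ?_
  obtain ⟨g, hg, hu⟩ := existsUnique_gg n σ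
  rw [Finset.sum_eq_single g]
  · rw [if_pos hg, inv]
  · intro g' _ hne
    rw [if_neg]
    exact fun h => hne (hu g' h)
  · simp

lemma expand_sum {R : Type*} [CommRing R] (n : ℕ) (a : Fin (2 * n) → R)
    (s : Fin (2 * n) → Fin (2 * n) → R) (hs : ∀ i j, s i j = s j i) :
    ∑ σ : Equiv.Perm (Fin (2 * n)), ((Equiv.Perm.sign σ : ℤ) : R) *
      ∏ i, ((a (σ (e1 n (i, false))) - a (σ (e1 n (i, true)))) *
        s (σ (e1 n (i, false))) (σ (e1 n (i, true)))) =
    2 ^ n * ∑ σ : Equiv.Perm (Fin (2 * n)), ((Equiv.Perm.sign σ : ℤ) : R) *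
      ∏ i, (a (σ (e1 n (i, false))) * s (σ (e1 n (i, false))) (σ (e1 n (i, true)))) := by
  have h1 : ∀ σ : Equiv.Perm (Fin (2 * n)),
      ∏ i, ((a (σ (e1 n (i, false))) - a (σ (e1 n (i, true)))) *
        s (σ (e1 n (i, false))) (σ (e1 n (i, true)))) =
      ∑ ε : Fin n → Bool, ∏ i, ((if ε i then -1 else 1) *
        (a (σ (e1 n (i, ε i))) * s (σ (e1 n (i, ε i))) (σ (e1 n (i, !ε i))))) := by
    intro σ
    rw [← Fintype.prod_sum (fun (i : Fin n) (b : Bool) => (if b then -1 else 1) *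
        (a (σ (e1 n (i, b))) * s (σ (e1 n (i, b))) (σ (e1 n (i, !b)))))]
    refine Finset.prod_congr rfl fun i _ => ?_
    rw [Fintype.sum_bool]
    simp only [if_true, Bool.not_true, Bool.not_false]
    rw [hs (σ (e1 n (i, true)))]
    simp
    ring
  simp_rw [h1, Finset.mul_sum]
  rw [Finset.sum_comm]
  have h2 : ∀ ε : Fin n → Bool, ∑ σ : Equiv.Perm (Fin (2 * n)), ((Equiv.Perm.sign σ : ℤ) : R) *
      ∏ i, ((if ε i then -1 else 1) *
        (a (σ (e1 n (i, ε i))) * s (σ (e1 n (i, ε i))) (σ (e1 n (i, !ε i))))) =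
      ∑ σ : Equiv.Perm (Fin (2 * n)), ((Equiv.Perm.sign σ : ℤ) : R) *
      ∏ i, (a (σ (e1 n (i, false))) * s (σ (e1 n (i, false))) (σ (e1 n (i, true)))) := by
    intro ε
    rw [← sum_hat n (sw n ε) (fun σ => ((Equiv.Perm.sign σ : ℤ) : R) *
      ∏ i, (a (σ (e1 n (i, false))) * s (σ (e1 n (i, false))) (σ (e1 n (i, true)))))]
    refine Finset.sum_congr rfl fun σ _ => ?_
    simp only [sign_mul_hat, mul_hat, sw_false, sw_true, sign_sw]
    rw [mul_assoc, Finset.prod_mul_distrib]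
    congr 2
    push_cast
    refine Finset.prod_congr rfl fun i _ => ?_
    cases ε i <;> simp
  simp_rw [h2]
  rw [Finset.sum_const, nsmul_eq_mul, Finset.mul_sum]
  simp

lemma symm_one {R : Type*} [CommRing R] (n : ℕ) (a : Fin (2 * n) → R)
    (s : Fin (2 * n) → Fin (2 * n) → R) :
    (n.factorial : R) * ∑ σ : Equiv.Perm (Fin (2 * n)), ((Equiv.Perm.sign σ : ℤ) : R) *
      ∏ i, (a (σ (e1 n (i, false))) * s (σ (e1 n (i, false))) (σ (e1 n (i, true)))) =
    ∑ σ : Equiv.Perm (Fin (2 * n)), ((Equiv.Perm.sign σ : ℤ) : R) *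
      (∏ i, a (σ (e1 n (i, false)))) *
      (Matrix.of fun i j : Fin n => s (σ (e1 n (i, false))) (σ (e1 n (j, true)))).det := by
  simp_rw [Matrix.det_apply', Finset.mul_sum]
  rw [Finset.sum_comm (s := Finset.univ) (t := Finset.univ)]
  have h : ∀ τ : Equiv.Perm (Fin n), ∑ σ : Equiv.Perm (Fin (2 * n)),
      ((Equiv.Perm.sign σ : ℤ) : R) * (∏ i, a (σ (e1 n (i, false)))) *
      (((Equiv.Perm.sign τ : ℤ) : R) *
        ∏ i, (Matrix.of fun i j : Fin n => s (σ (e1 n (i, false))) (σ (e1 n (j, true)))) (τ i) i) =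
      ∑ σ : Equiv.Perm (Fin (2 * n)), ((Equiv.Perm.sign σ : ℤ) : R) *
      ∏ i, (a (σ (e1 n (i, false))) * s (σ (e1 n (i, false))) (σ (e1 n (i, true)))) := by
    intro τ
    rw [← sum_hat n (two n 1 τ)]
    refine Finset.sum_congr rfl fun σ _ => ?_
    simp only [sign_mul_hat, mul_hat, two_false, two_true, sign_two, Matrix.of_apply,
      Equiv.Perm.one_apply, map_one, one_mul, Finset.prod_mul_distrib]
    rw [Equiv.prod_comp τ (fun i => s (σ (e1 n (i, false))) (σ (e1 n (i, true))))]
    linear_combination ((Equiv.Perm.sign σ : ℤ) : R) * (∏ i, a (σ (e1 n (i, false)))) *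
      (∏ i, s (σ (e1 n (i, false))) (σ (e1 n (i, true)))) * sign_sq (R := R) τ
  simp_rw [h]
  rw [Finset.sum_const, Finset.card_univ, Fintype.card_perm, Fintype.card_fin, nsmul_eq_mul,
    Finset.mul_sum]

lemma symm_two {R : Type*} [CommRing R] (n : ℕ) (a : Fin (2 * n) → R)
    (u v : Fin (2 * n) → Fin n → R) :
    (n.factorial : R) * (n.factorial : R) *
    ∑ σ : Equiv.Perm (Fin (2 * n)), ((Equiv.Perm.sign σ : ℤ) : R) *
      ((∏ i, a (σ (e1 n (i, false)))) * (∏ i, u (σ (e1 n (i, false))) i) *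
        ∏ i, v (σ (e1 n (i, true))) i) =
    ∑ σ : Equiv.Perm (Fin (2 * n)), ((Equiv.Perm.sign σ : ℤ) : R) *
      (∏ i, a (σ (e1 n (i, false)))) *
      ((Matrix.of fun i j : Fin n => u (σ (e1 n (i, false))) j).det *
       (Matrix.of fun i j : Fin n => v (σ (e1 n (i, true))) j).det) := by
  simp_rw [Matrix.det_apply', Finset.sum_mul_sum, Finset.mul_sum]
  rw [Finset.sum_comm (s := Finset.univ) (t := Finset.univ)]
  have h : ∀ τ ρ : Equiv.Perm (Fin n), ∑ σ : Equiv.Perm (Fin (2 * n)),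
      ((Equiv.Perm.sign σ : ℤ) : R) * (∏ i, a (σ (e1 n (i, false)))) *
      (((Equiv.Perm.sign τ : ℤ) : R) *
        (∏ i, (Matrix.of fun i j : Fin n => u (σ (e1 n (i, false))) j) (τ i) i) *
       (((Equiv.Perm.sign ρ : ℤ) : R) *
        ∏ i, (Matrix.of fun i j : Fin n => v (σ (e1 n (i, true))) j) (ρ i) i)) =
      ∑ σ : Equiv.Perm (Fin (2 * n)), ((Equiv.Perm.sign σ : ℤ) : R) *
      ((∏ i, a (σ (e1 n (i, false)))) * (∏ i, u (σ (e1 n (i, false))) i) *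
        ∏ i, v (σ (e1 n (i, true))) i) := by
    intro τ ρ
    rw [← sum_hat n (two n τ⁻¹ ρ⁻¹)]
    refine Finset.sum_congr rfl fun σ _ => ?_
    simp only [sign_mul_hat, mul_hat, two_false, two_true, sign_two, Matrix.of_apply,
      Equiv.Perm.coe_inv, Equiv.symm_apply_apply, Equiv.Perm.sign_inv]
    rw [Equiv.prod_comp τ.symm (fun i => a (σ (e1 n (i, false))))]
    push_cast
    have h1 := sign_sq (R := R) τ
    have h2 := sign_sq (R := R) ρ
    set p := ((Equiv.Perm.sign τ : ℤ) : R)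
    set q := ((Equiv.Perm.sign ρ : ℤ) : R)
    generalize (∏ i, a (σ (e1 n (i, false)))) = A
    generalize (∏ i, u (σ (e1 n (i, false))) i) = U
    generalize (∏ i, v (σ (e1 n (i, true))) i) = V
    linear_combination ((Equiv.Perm.sign σ : ℤ) : R) * A * U * V * (q * q * h1 + h2)
  have h' : ∀ τ : Equiv.Perm (Fin n), ∑ σ : Equiv.Perm (Fin (2 * n)), ∑ ρ : Equiv.Perm (Fin n),
      ((Equiv.Perm.sign σ : ℤ) : R) * (∏ i, a (σ (e1 n (i, false)))) *
      (((Equiv.Perm.sign τ : ℤ) : R) *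
        (∏ i, (Matrix.of fun i j : Fin n => u (σ (e1 n (i, false))) j) (τ i) i) *
       (((Equiv.Perm.sign ρ : ℤ) : R) *
        ∏ i, (Matrix.of fun i j : Fin n => v (σ (e1 n (i, true))) j) (ρ i) i)) =
      (n.factorial : R) * ∑ σ : Equiv.Perm (Fin (2 * n)), ((Equiv.Perm.sign σ : ℤ) : R) *
      ((∏ i, a (σ (e1 n (i, false)))) * (∏ i, u (σ (e1 n (i, false))) i) *
        ∏ i, v (σ (e1 n (i, true))) i) := by
    intro τ
    rw [Finset.sum_comm]
    simp_rw [h]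
    rw [Finset.sum_const, Finset.card_univ, Fintype.card_perm, Fintype.card_fin, nsmul_eq_mul]
  simp_rw [h']
  rw [Finset.sum_const, Finset.card_univ, Fintype.card_perm, Fintype.card_fin, nsmul_eq_mul,
    ← Finset.mul_sum, mul_assoc]

lemma altDet_eq {R : Type*} [CommRing R] (n : ℕ) (α β : Fin n → ℕ) (x a : Fin (2 * n) → R) :
    altDet n α β x a = ((Equiv.Perm.sign (piP n) : ℤ) : R) *
    ∑ σ : Equiv.Perm (Fin (2 * n)), ((Equiv.Perm.sign σ : ℤ) : R) *
      ((∏ i, a (σ (e1 n (i, false)))) * (∏ i, x (σ (e1 n (i, false))) ^ α i) *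
        ∏ i, x (σ (e1 n (i, true))) ^ β i) := by
  rw [altDet, Matrix.det_apply', Finset.mul_sum, ← Equiv.sum_comp (Equiv.mulRight (piP n)⁻¹)]
  refine Finset.sum_congr rfl fun σ _ => ?_
  simp only [Equiv.coe_mulRight]
  have h : ∀ p, (σ * (piP n)⁻¹) (e2 n p) = σ (e1 n p) := by
    intro p
    rw [Equiv.Perm.mul_apply]
    congr 1
    rw [Equiv.Perm.inv_eq_iff_eq]
    simp [piP]
  rw [← (e2 n).prod_comp, Fintype.prod_prod_type, Equiv.Perm.sign_mul, Equiv.Perm.sign_inv]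
  simp only [Fintype.prod_bool, h, Matrix.of_apply]
  push_cast
  rw [← Finset.prod_mul_distrib, ← Finset.prod_mul_distrib, ← mul_assoc,
    mul_comm ((Equiv.Perm.sign (piP n) : ℤ) : R)]
  congr 1
  refine Finset.prod_congr rfl fun i _ => ?_
  rw [dif_neg (by simp [e2]), dif_pos (by simp [e2])]
  simp only [e2, Equiv.coe_fn_mk, if_true, Nat.add_sub_cancel]
  simp [mul_comm]

end Sund

namespace Sund

/-! ### The identity over a field of characteristic zero -/

lemma term_eq {K : Type*} [Field K] (n : ℕ) (hn : 1 ≤ n) (x : Fin (2 * n) → K)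
    (hx : ∀ i j, 1 + x i * x j ≠ 0) (σ : Equiv.Perm (Fin (2 * n))) :
    (Matrix.of fun i j : Fin n =>
      (1 + x (σ (e1 n (i, false))) * x (σ (e1 n (j, true))))⁻¹).det *
      ∏ i, ∏ j ∈ Ioi i, (1 + x i * x j) =
    ((Equiv.Perm.sign (piP n) : ℤ) : K) *
      ((∑ l ∈ frobeniusSet n, (Matrix.of fun i j : Fin n =>
          x (σ (e1 n (i, false))) ^ ((l j : ℕ) + (n - 1 - (j : ℕ)))).det) *
       (∑ l ∈ frobeniusSet n, (Matrix.of fun i j : Fin n =>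
          x (σ (e1 n (i, true))) ^ ((l j : ℕ) + (n - 1 - (j : ℕ)))).det)) := by
  rw [littlewood n hn (fun i => x (σ (e1 n (i, false)))),
    littlewood n hn (fun i => x (σ (e1 n (i, true))))]
  have hC := cauchy n (fun i => x (σ (e1 n (i, false)))) (fun i => x (σ (e1 n (i, true))))
    (fun i j => hx _ _)
  rw [← prod_symm_perm (2 * n) (fun p q => 1 + x p * x q) (fun p q => by ring) σ,
    prod_pairs_symm n (fun p q => 1 + x (σ p) * x (σ q)) (fun p q => by ring), sign_piP]
  push_cast
  have e : ∏ i : Fin n, ∏ j ∈ Ioi i,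
      ((x (σ (e1 n (i, false))) - x (σ (e1 n (j, false)))) *
        (x (σ (e1 n (j, true))) - x (σ (e1 n (i, true))))) =
      (∏ i : Fin n, ∏ _j ∈ Ioi i, (-1 : K)) *
      (∏ i : Fin n, ∏ j ∈ Ioi i, (x (σ (e1 n (i, false))) - x (σ (e1 n (j, false))))) *
      (∏ i : Fin n, ∏ j ∈ Ioi i, (x (σ (e1 n (i, true))) - x (σ (e1 n (j, true))))) := by
    rw [← Finset.prod_mul_distrib, ← Finset.prod_mul_distrib]
    refine Finset.prod_congr rfl fun i _ => ?_
    rw [← Finset.prod_mul_distrib, ← Finset.prod_mul_distrib]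
    refine Finset.prod_congr rfl fun j _ => ?_
    ring
  rw [e] at hC
  simp only [Finset.prod_mul_distrib] at hC ⊢
  linear_combination
    (∏ i : Fin n, ∏ j ∈ Ioi i, (1 + x (σ (e1 n (i, false))) * x (σ (e1 n (j, false))))) *
    (∏ i : Fin n, ∏ j ∈ Ioi i, (1 + x (σ (e1 n (i, true))) * x (σ (e1 n (j, true))))) * hC

lemma field_char_zero {K : Type*} [Field K] [CharZero K] (n : ℕ) (hn : 1 ≤ n)
    (x a : Fin (2 * n) → K) (hx : ∀ i j, 1 + x i * x j ≠ 0) :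
    pf (Matrix.of fun i j : Fin (2 * n) => (a i - a j) * (1 + x i * x j)⁻¹) *
      ∏ i, ∏ j ∈ Ioi i, (1 + x i * x j) = Un n x a := by
  have hc : (2 : K) ^ n * (n.factorial : K) * (n.factorial : K) ≠ 0 := by
    have : (n.factorial : K) ≠ 0 := by exact_mod_cast n.factorial_ne_zero
    exact mul_ne_zero (mul_ne_zero (pow_ne_zero _ two_ne_zero) this) this
  apply mul_left_cancel₀ hc
  have h1 := pf_sum n (Matrix.of fun i j : Fin (2 * n) => (a i - a j) * (1 + x i * x j)⁻¹)
    (fun i j => by simp only [Matrix.of_apply]; rw [mul_comm (x i)]; ring)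
  simp only [Matrix.of_apply] at h1
  rw [expand_sum n a (fun i j => (1 + x i * x j)⁻¹) (fun i j => by rw [mul_comm (x i)])] at h1
  have h2 := symm_one n a (fun i j => (1 + x i * x j)⁻¹)
  push_cast at h1
  have h3 : (n.factorial : K) * (n.factorial : K) * Un n x a =
      ∑ σ : Equiv.Perm (Fin (2 * n)), ((Equiv.Perm.sign σ : ℤ) : K) *
      (∏ i, a (σ (e1 n (i, false)))) * (((Equiv.Perm.sign (piP n) : ℤ) : K) *
      ((∑ l ∈ frobeniusSet n, (Matrix.of fun i j : Fin n =>
          x (σ (e1 n (i, false))) ^ ((l j : ℕ) + (n - 1 - (j : ℕ)))).det) *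
       (∑ l ∈ frobeniusSet n, (Matrix.of fun i j : Fin n =>
          x (σ (e1 n (i, true))) ^ ((l j : ℕ) + (n - 1 - (j : ℕ)))).det))) := by
    have h4 : ∀ l m : Fin n → Fin n, (n.factorial : K) * (n.factorial : K) *
        altDet n (fun j => (l j : ℕ) + (n - 1 - (j : ℕ)))
          (fun j => (m j : ℕ) + (n - 1 - (j : ℕ))) x a =
        ∑ σ : Equiv.Perm (Fin (2 * n)), ((Equiv.Perm.sign σ : ℤ) : K) *
        (∏ i, a (σ (e1 n (i, false)))) * (((Equiv.Perm.sign (piP n) : ℤ) : K) *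
        ((Matrix.of fun i j : Fin n =>
          x (σ (e1 n (i, false))) ^ ((l j : ℕ) + (n - 1 - (j : ℕ)))).det *
         (Matrix.of fun i j : Fin n =>
          x (σ (e1 n (i, true))) ^ ((m j : ℕ) + (n - 1 - (j : ℕ)))).det)) := by
      intro l m
      have := symm_two n a (fun p j => x p ^ ((l j : ℕ) + (n - 1 - (j : ℕ))))
        (fun p j => x p ^ ((m j : ℕ) + (n - 1 - (j : ℕ))))
      rw [altDet_eq, mul_left_comm, this, Finset.mul_sum]
      refine Finset.sum_congr rfl fun σ _ => ?_
      ring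
    rw [Un, Finset.mul_sum]
    rw [Finset.sum_congr rfl fun l _ => (Finset.mul_sum _ _ _).trans
      ((Finset.sum_congr rfl fun m _ => h4 l m).trans Finset.sum_comm)]
    rw [Finset.sum_comm]
    refine Finset.sum_congr rfl fun σ _ => ?_
    rw [Finset.sum_mul_sum, Finset.mul_sum, Finset.mul_sum]
    refine Finset.sum_congr rfl fun l _ => ?_
    rw [Finset.mul_sum, Finset.mul_sum]
  have h5 : (n.factorial : K) * (n.factorial : K) *
      (pf (Matrix.of fun i j : Fin (2 * n) => (a i - a j) * (1 + x i * x j)⁻¹) *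
      ∏ i, ∏ j ∈ Ioi i, (1 + x i * x j)) = (n.factorial : K) * (n.factorial : K) * Un n x a := by
    rw [h3]
    simp_rw [← term_eq n hn x hx, ← mul_assoc]
    rw [← Finset.sum_mul, ← h2]
    have h2n : (2 : K) ^ n ≠ 0 := pow_ne_zero _ two_ne_zero
    apply mul_left_cancel₀ h2n
    linear_combination (n.factorial : K) * (∏ i, ∏ j ∈ Ioi i, (1 + x i * x j)) * h1
  linear_combination (2 : K) ^ n * h5

/-! ### Transfer to arbitrary fields -/

lemma map_pf {R S : Type*} [CommRing R] [CommRing S] (f : R →+* S) (n : ℕ)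
    (B : Matrix (Fin (2 * n)) (Fin (2 * n)) R) : f (pf B) = pf (Matrix.of fun i j => f (B i j)) := by
  simp [pf, map_sum, map_prod]

lemma map_Un {R S : Type*} [CommRing R] [CommRing S] (f : R →+* S) (n : ℕ)
    (x a : Fin (2 * n) → R) : f (Un n x a) = Un n (fun i => f (x i)) (fun i => f (a i)) := by
  simp only [Un, map_sum]
  refine Finset.sum_congr rfl fun l _ => Finset.sum_congr rfl fun m _ => ?_
  rw [altDet, altDet, RingHom.map_det]
  congr 1
  ext i j
  simp only [RingHom.mapMatrix_apply, Matrix.map_apply, Matrix.of_apply]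
  split_ifs <;> simp

lemma map_inverse {R K : Type*} [CommRing R] [Field K] (f : R →+* K) (r : R) (hr : IsUnit r) :
    f (Ring.inverse r) = (f r)⁻¹ := by
  apply eq_inv_of_mul_eq_one_left
  rw [← map_mul, Ring.inverse_mul_cancel _ hr, map_one]

lemma any_field {F : Type*} [Field F] (n : ℕ) (hn : 1 ≤ n)
    (x a : Fin (2 * n) → F) (hx : ∀ i j, 1 + x i * x j ≠ 0) :
    pf (Matrix.of fun i j : Fin (2 * n) => (a i - a j) * (1 + x i * x j)⁻¹) *
      ∏ i, ∏ j ∈ Ioi i, (1 + x i * x j) = Un n x a := by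
  let A := MvPolynomial (Fin (2 * n) ⊕ Fin (2 * n)) ℤ
  let P : A := ∏ i : Fin (2 * n), ∏ j : Fin (2 * n),
    (1 + MvPolynomial.X (Sum.inl i) * MvPolynomial.X (Sum.inl j))
  have hP0 : P ≠ 0 := by
    intro h
    have := congrArg (MvPolynomial.eval (fun _ => (0 : ℤ))) h
    simp [P, map_prod] at this
  let L := Localization.Away P
  have hle : Submonoid.powers P ≤ nonZeroDivisors A :=
    powers_le_nonZeroDivisors_of_noZeroDivisors hP0
  have : IsDomain L := IsLocalization.isDomain_of_le_nonZeroDivisors L hle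
  have hAL : Function.Injective (algebraMap A L) := IsLocalization.injective L hle
  let K := FractionRing L
  have hLK : Function.Injective (algebraMap L K) := IsFractionRing.injective L K
  let g : ℤ →+* K := (algebraMap L K).comp ((algebraMap A L).comp MvPolynomial.C)
  have hg : Function.Injective g := hLK.comp (hAL.comp (MvPolynomial.C_injective _ _))
  have : CharZero K := by
    refine ⟨fun p q h => ?_⟩
    have : g (p : ℤ) = g (q : ℤ) := by simpa using h
    exact_mod_cast hg this
  let ξ : Fin (2 * n) → L := fun i => algebraMap A L (MvPolynomial.X (Sum.inl i))
  let α : Fin (2 * n) → L := fun i => algebraMap A L (MvPolynomial.X (Sum.inr i))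
  have hu : ∀ i j, IsUnit (1 + ξ i * ξ j) := by
    intro i j
    have h1 : IsUnit (algebraMap A L P) := IsLocalization.Away.algebraMap_isUnit P
    refine isUnit_of_dvd_unit ?_ h1
    have h2 : (1 + MvPolynomial.X (Sum.inl i) * MvPolynomial.X (Sum.inl j) : A) ∣ P :=
      (Finset.dvd_prod_of_mem (fun j => (1 + MvPolynomial.X (Sum.inl i) *
        MvPolynomial.X (Sum.inl j) : A)) (Finset.mem_univ j)).trans
      (Finset.dvd_prod_of_mem (fun i => ∏ j : Fin (2 * n), (1 + MvPolynomial.X (Sum.inl i) *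
        MvPolynomial.X (Sum.inl j) : A)) (Finset.mem_univ i))
    have := map_dvd (algebraMap A L) h2
    simpa [ξ] using this
  have main : pf (Matrix.of fun i j : Fin (2 * n) => (α i - α j) * Ring.inverse (1 + ξ i * ξ j)) *
      ∏ i, ∏ j ∈ Ioi i, (1 + ξ i * ξ j) = Un n ξ α := by
    apply hLK
    have := field_char_zero n hn (fun i => algebraMap L K (ξ i)) (fun i => algebraMap L K (α i))
      (fun i j => by
        have := ((hu i j).map (algebraMap L K)).ne_zero
        simpa using this)
    rw [map_mul, map_pf, map_Un, ← this]
    simp only [Matrix.of_apply, map_mul, map_sub, map_inverse _ _ (hu _ _), map_add, map_one,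
      map_prod]
  let φ : A →+* F := MvPolynomial.eval₂Hom (Int.castRingHom F) (Sum.elim x a)
  have hX1 : ∀ i, φ (MvPolynomial.X (Sum.inl i)) = x i := fun i =>
    MvPolynomial.eval₂Hom_X' _ _ _
  have hX2 : ∀ i, φ (MvPolynomial.X (Sum.inr i)) = a i := fun i =>
    MvPolynomial.eval₂Hom_X' _ _ _
  have hφ : IsUnit (φ P) := by
    apply Ne.isUnit
    simp only [P, map_prod, map_add, map_mul, map_one, hX1]
    exact Finset.prod_ne_zero_iff.mpr fun i _ => Finset.prod_ne_zero_iff.mpr fun j _ => hx i j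
  let ψ : L →+* F := IsLocalization.Away.lift P hφ
  have hξ : ∀ i, ψ (ξ i) = x i := by
    exact fun i => (IsLocalization.Away.lift_eq P hφ _).trans (hX1 i)
  have hα : ∀ i, ψ (α i) = a i := by
    exact fun i => (IsLocalization.Away.lift_eq P hφ _).trans (hX2 i)
  have := congrArg ψ main
  rw [map_mul, map_pf, map_Un] at this
  simpa only [Matrix.of_apply, map_mul, map_sub, map_inverse _ _ (hu _ _), map_add, map_one,
      map_prod, hξ, hα] using this

end Sund

/-- Sundquist:
`Pf[ (a_i − a_j)/(1 + x_i x_j) ] = U^n(X;A) / Π_{i<j}(1 + x_i x_j)`. -/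
theorem sundquist_second (F : Type*) [Field F] (n : ℕ) (hn : 1 ≤ n)
    (x a : Fin (2 * n) → F)
    (hx : ∀ i j : Fin (2 * n), 1 + x i * x j ≠ 0) :
    pf (Matrix.of fun i j : Fin (2 * n) => (a i - a j) / (1 + x i * x j)) =
      Un n x a / ∏ i : Fin (2 * n), ∏ j ∈ Ioi i, (1 + x i * x j) := by
  have h := Sund.any_field n hn x a hx
  have hD : ∏ i : Fin (2 * n), ∏ j ∈ Ioi i, (1 + x i * x j) ≠ 0 :=
    Finset.prod_ne_zero_iff.mpr fun i _ => Finset.prod_ne_zero_iff.mpr fun j _ => hx i j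
  rw [eq_div_iff hD, ← h]
  simp only [div_eq_mul_inv]
end

section
/- Let n ≥ 1 and let x_1,...,x_{2n}, a_1,...,a_{2n} be variables. Then U^n(X;A) = V^n(X, 1−X^2; A, 1), where V^n(X, 1−X^2; A, 1) is the determinant of the 2n×2n matrix with (i,j) entry a_i x_i^{n−j}(1 − x_i^2)^{j−1} for 1≤j≤n and x_i^{2n−j}(1 − x_i^2)^{j−n−1} for n+1≤j≤2n, and U^n(X;A) = Σ_{λ,μ∈P_n} a_{λ,μ}(X;A). -/
open Finset

section aux
variable {R S : Type*} [CommRing R] [CommRing S] [Algebra R S]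

theorem mem_frob {n : ℕ} (l : Fin n → Fin n) : l ∈ frobeniusSet n ↔
   (∀ i j : Fin n, i ≤ j → l j ≤ l i) ∧
    ∀ i : Fin n, (i : ℕ) + 1 ≤ (l i : ℕ) →
      (∑ j : Fin n, if (i : ℕ) + 1 ≤ (l j : ℕ) then 1 else 0) = (l i : ℕ) + 1 := by
  simp only [frobeniusSet, Finset.card_filter, Finset.mem_filter, Finset.mem_univ, true_and]

def extA {n : ℕ} (l : Fin n → Fin n) : Fin (n+1) → Fin (n+1) :=
  Fin.snoc (α := fun _ => Fin (n+1)) (fun j => (l j).castSucc) 0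

def extB {n : ℕ} (l : Fin n → Fin n) : Fin (n+1) → Fin (n+1) :=
  Fin.cons (α := fun _ => Fin (n+1)) (Fin.last n) (fun j => (l j).succ)

@[simp] theorem extA_castSucc {n : ℕ} (l : Fin n → Fin n) (j : Fin n) :
    extA l j.castSucc = (l j).castSucc := by simp [extA]
@[simp] theorem extA_last {n : ℕ} (l : Fin n → Fin n) :
    extA l (Fin.last n) = 0 := by simp [extA]
@[simp] theorem extB_succ {n : ℕ} (l : Fin n → Fin n) (j : Fin n) :
    extB l j.succ = (l j).succ := by simp [extB]
@[simp] theorem extB_zero {n : ℕ} (l : Fin n → Fin n) :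
    extB l 0 = Fin.last n := by simp [extB]

theorem extA_inj {n : ℕ} : Function.Injective (extA (n := n)) := by
  intro l l' h
  funext j
  have := congrFun h j.castSucc
  simpa using this

theorem extB_inj {n : ℕ} : Function.Injective (extB (n := n)) := by
  intro l l' h
  funext j
  have := congrFun h j.succ
  simpa using this

theorem extA_mem {n : ℕ} (l : Fin n → Fin n) : extA l ∈ frobeniusSet (n+1) ↔ l ∈ frobeniusSet n := by
  simp only [mem_frob, Fin.forall_fin_succ', Fin.sum_univ_castSucc]
  simp [Fin.le_last]

theorem extB_mem {n : ℕ} (l : Fin n → Fin n) : extB l ∈ frobeniusSet (n+1) ↔ l ∈ frobeniusSet n := by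
  simp only [mem_frob, Fin.forall_fin_succ, Fin.sum_univ_succ]
  simp [Fin.le_last]
  intro _
  have h0 : 1 ≤ n → (if 1 ≤ n then 1 else 0) + n = n + 1 := fun h => by rw [if_pos h]; omega
  rw [and_iff_right h0]
  refine forall_congr' fun i => forall_congr' fun hi => ?_
  have := (l i).2
  have hi' : (i : ℕ) < l i := hi
  rw [if_pos (by omega)]
  omega

theorem frob_succ {n : ℕ} (hn : 1 ≤ n) :
    frobeniusSet (n+1) = (frobeniusSet n).image extA ∪ (frobeniusSet n).image extB := by
  ext l
  simp only [Finset.mem_union, Finset.mem_image]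
  constructor
  · intro hl
    have hl' := (mem_frob l).1 hl
    obtain ⟨h1, h2⟩ := hl'
    by_cases h0 : l (Fin.last n) = 0
    · left
      have hlt : ∀ j, (l j : ℕ) < n := by
        intro j
        have hj := h1 0 j (Fin.zero_le _)
        rw [Fin.le_iff_val_le_val] at hj
        refine lt_of_le_of_lt hj ?_
        by_contra hc
        have := h2 0 (by simp; omega)
        rw [Fin.sum_univ_castSucc, h0] at this
        have h3 : (∑ i : Fin n, if ((0 : Fin (n+1)) : ℕ) + 1 ≤ (l i.castSucc : ℕ) then 1 else 0) ≤ ∑ i : Fin n, 1 :=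
          Finset.sum_le_sum fun i _ => by split_ifs <;> simp
        simp at this h3
        omega
      have : l = extA (fun j => ⟨l j.castSucc, hlt _⟩) := by
        funext j
        refine Fin.lastCases ?_ (fun j => ?_) j
        · simp [h0]
        · simp
      rw [this] at hl
      exact ⟨_, (extA_mem _).1 hl, this.symm⟩
    · right
      have hpos : ∀ j, 1 ≤ (l j : ℕ) := by
        intro j
        have hj := h1 j (Fin.last n) (Fin.le_last _)
        rw [Fin.le_iff_val_le_val] at hj
        have : (l (Fin.last n) : ℕ) ≠ 0 := fun h => h0 (Fin.ext h)
        omega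
      have h00 : l 0 = Fin.last n := by
        have := h2 0 (by simpa using hpos 0)
        rw [Finset.sum_congr rfl (fun j _ => if_pos (by simpa using hpos j))] at this
        apply Fin.ext
        simp at this
        simp; omega
      have : l = extB (fun j => ⟨l j.succ - 1, by have := (l j.succ).2; omega⟩) := by
        funext j
        refine Fin.cases ?_ (fun j => ?_) j
        · simp [h00]
        · have := hpos j.succ
          apply Fin.ext; simp; omega
      rw [this] at hl
      exact ⟨_, (extB_mem _).1 hl, this.symm⟩
  · rintro (⟨l, hl, rfl⟩ | ⟨l, hl, rfl⟩)
    · exact (extA_mem _).2 hl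
    · exact (extB_mem _).2 hl

theorem frob_sum_succ {n : ℕ} (hn : 1 ≤ n) (F : (Fin (n+1) → Fin (n+1)) → R) :
    ∑ l ∈ frobeniusSet (n+1), F l =
      ∑ l ∈ frobeniusSet n, F (extA l) + ∑ l ∈ frobeniusSet n, F (extB l) := by
  rw [frob_succ hn, Finset.sum_union, Finset.sum_image extA_inj.injOn, Finset.sum_image extB_inj.injOn]
  rw [Finset.disjoint_left]
  intro l hA hB
  simp only [Finset.mem_image] at hA hB
  obtain ⟨p, _, rfl⟩ := hA
  obtain ⟨q, _, hq⟩ := hB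
  obtain ⟨m, rfl⟩ : ∃ m, n = m + 1 := ⟨n - 1, by omega⟩
  have := congrFun hq (Fin.last m).succ
  rw [extB_succ, Fin.succ_last, extA_last] at this
  exact Fin.succ_ne_zero _ this

/-- Expansion of the antisymmetrised alternant. -/
theorem alt_expand {M : Type*} [AddCommGroup M] [Module R M] (n : ℕ) (hn : 1 ≤ n) (e : ℤ → M) :
    ∀ f : M [⋀^Fin n]→ₗ[R] R,
    f (fun j => e (-(j : ℤ)) + (if (j : ℕ) = 0 then 0 else (-1 : R) ^ (j : ℕ) • e (j : ℤ))) =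
      ∑ l ∈ frobeniusSet n, f (fun j => e ((l j : ℤ) - (j : ℤ))) := by
  induction n, hn using Nat.le_induction with
  | base =>
    intro f
    have : frobeniusSet 1 = {fun _ => 0} := by decide
    rw [this, Finset.sum_singleton]
    congr 1
    funext j
    have : j = 0 := Subsingleton.elim _ _
    subst this
    simp
  | succ n hn ih =>
    intro f
    have key : ∀ (v : Fin n → M) (m : M),
        f (Fin.snoc (α := fun _ => M) v m) = (-1 : R) ^ n * f (Fin.cons (α := fun _ => M) m v) := by
      intro v m
      rw [Fin.snoc_eq_cons_rotate]
      have := f.map_perm (Fin.cons (α := fun _ => M) m v) (finRotate (n+1))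
      rw [sign_finRotate] at this
      simp only [Function.comp_def] at this
      rw [this, Units.smul_def]
      simp
    have kc : ∀ (v : Fin n → M) (m : M), f (Fin.cons (α := fun _ => M) m v) = f.curryLeft m v := by
      intro v m; rfl
    have hs : (fun j : Fin (n+1) => e (-(j : ℤ)) + (if (j : ℕ) = 0 then 0 else (-1 : R) ^ (j : ℕ) • e (j : ℤ)))
      = Fin.snoc (α := fun _ => M) (fun j : Fin n => e (-(j : ℤ)) + (if (j : ℕ) = 0 then 0 else (-1 : R) ^ (j : ℕ) • e (j : ℤ)))
        (e (-(n : ℤ)) + (-1 : R) ^ n • e n) := by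
      funext j
      refine Fin.lastCases ?_ (fun j => ?_) j
      · simp; omega
      · simp
    rw [hs, key, kc, map_add, map_smul, AlternatingMap.add_apply, AlternatingMap.smul_apply, ih, ih,
      frob_sum_succ hn, mul_add, smul_eq_mul, ← mul_assoc, ← pow_add, Even.neg_one_pow ⟨n, rfl⟩, one_mul,
      Finset.mul_sum]
    congr 1
    · refine Finset.sum_congr rfl fun l _ => ?_
      rw [← kc, ← key]
      congr 1
      funext j
      refine Fin.lastCases ?_ (fun j => ?_) j
      · simp
      · simp
    · refine Finset.sum_congr rfl fun l _ => ?_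
      rw [← kc]
      congr 1
      funext j
      refine Fin.cases ?_ (fun j => ?_) j
      · simp
      · simp

def GG (x : S) (m j : ℕ) : S := x ^ (m - j) + if j = 0 then 0 else (-1) ^ j * x ^ (m + j)

theorem GG_step (x : S) (m k : ℕ) (hk : k ≤ m) : (1 - x ^ 2) * GG x m k =
    GG x (m+1) (k+1) - (if k = 0 then 0 else if k = 1 then 2 * GG x (m+1) 0 else GG x (m+1) (k-1)) := by
  obtain ⟨d, rfl⟩ : ∃ d, m = k + d := ⟨m - k, by omega⟩
  match k with
  | 0 => simp [GG]; ring
  | 1 => simp [GG]; ring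
  | k + 2 =>
    have h1 : k + 2 + d - (k + 2) = d := by omega
    have h2 : k + 2 + d + 1 - (k + 2 + 1) = d := by omega
    have h3 : k + 2 + d + 1 - (k + 1) = d + 2 := by omega
    have h4 : k + 2 - 1 = k + 1 := by omega
    simp only [GG, h1, h2, h3, h4]
    rw [if_neg (by omega), if_neg (by omega), if_neg (by omega), if_neg (by omega), if_neg (by omega)]
    ring

theorem tri_span (x : S) (j : ℕ) : ∀ m, j ≤ m →
    x ^ (m - j) * (1 - x ^ 2) ^ j - GG x m j ∈
      Submodule.span R (GG x m '' (Finset.range j : Set ℕ)) := by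
  induction j with
  | zero => intro m _; simp [GG]
  | succ j ih =>
    intro m hm
    obtain ⟨m, rfl⟩ : ∃ m', m = m' + 1 := ⟨m - 1, by omega⟩
    have hjm : j ≤ m := by omega
    have hG : ∀ k < j + 1, GG x (m+1) k ∈ Submodule.span R (GG x (m+1) '' (Finset.range (j+1) : Set ℕ)) :=
      fun k hk => Submodule.subset_span ⟨k, by simpa using hk, rfl⟩
    have hcor : ∀ k ≤ j, (if k = 0 then 0 else if k = 1 then 2 * GG x (m+1) 0 else GG x (m+1) (k-1)) ∈
        Submodule.span R (GG x (m+1) '' (Finset.range (j+1) : Set ℕ)) := by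
      intro k hk
      split_ifs
      · exact zero_mem _
      · rw [two_mul]; exact add_mem (hG _ (by omega)) (hG _ (by omega))
      · exact hG _ (by omega)
    have h1 := ih m hjm
    have h2 : (1 - x ^ 2) * (x ^ (m - j) * (1 - x ^ 2) ^ j - GG x m j) ∈
        Submodule.span R (GG x (m+1) '' (Finset.range (j+1) : Set ℕ)) := by
      refine Submodule.span_induction (p := fun y _ => (1 - x ^ 2) * y ∈ Submodule.span R (GG x (m+1) '' (Finset.range (j+1) : Set ℕ))) ?_ ?_ ?_ ?_ h1
      · rintro _ ⟨k, hk, rfl⟩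
        have hk : k < j := by simpa using hk
        rw [GG_step x m k (by omega)]
        exact sub_mem (hG _ (by omega)) (hcor _ (by omega))
      · simp
      · intro a b _ _ ha hb
        rw [mul_add]; exact add_mem ha hb
      · intro r a _ ha
        rw [mul_smul_comm]; exact Submodule.smul_mem _ _ ha
    rw [mul_sub, GG_step x m j hjm] at h2
    have h3 := sub_mem h2 (hcor j le_rfl)
    have h4 : m + 1 - (j + 1) = m - j := by omega
    rw [h4]
    convert h3 using 1
    ring

theorem alt_tri {n : ℕ} (f : S [⋀^Fin n]→ₗ[R] R) (v g : Fin n → S) (A : Matrix (Fin n) (Fin n) R)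
    (hA : ∀ i, v i = ∑ k, A i k • g k) : f v = A.det * f g := by
  classical
  have h := AlternatingMap.eq_smul_basis_det (Pi.basisFun R (Fin n)) (f.compLinearMap (Fintype.linearCombination R g))
  have e1 : (fun i => (Fintype.linearCombination R g) (A i)) = v := by
    funext i; rw [hA]; rfl
  have e2 : (fun i => (Fintype.linearCombination R g) (Pi.basisFun R (Fin n) i)) = g := by
    funext i; simp [Fintype.linearCombination_apply_single]
  have h2 : f (fun i => (Fintype.linearCombination R g) (A i)) =
      f (fun i => (Fintype.linearCombination R g) (Pi.basisFun R (Fin n) i)) * A.det := by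
    rw [Pi.basisFun_det] at h
    exact congrArg (fun F : (Fin n → R) [⋀^Fin n]→ₗ[R] R => F (fun i => A i)) h
  rw [e1, e2] at h2
  rw [h2, mul_comm]

theorem alt_main (n : ℕ) (hn : 1 ≤ n) (x : S) (f : S [⋀^Fin n]→ₗ[R] R) :
    f (fun j => x ^ (n - 1 - (j : ℕ)) * (1 - x ^ 2) ^ (j : ℕ)) =
      ∑ l ∈ frobeniusSet n, f (fun j => x ^ ((l j : ℕ) + (n - 1 - (j : ℕ)))) := by
  have hc : ∀ j : Fin n, ∃ c : ℕ → R, ∑ k ∈ Finset.range j, c k • GG x (n-1) k =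
      x ^ (n - 1 - (j : ℕ)) * (1 - x ^ 2) ^ (j : ℕ) - GG x (n-1) j := by
    intro j
    have := tri_span (R := R) x j (n-1) (by have := j.2; omega)
    rw [Submodule.mem_span_image_finset_iff_exists_fun'] at this
    exact this
  choose c hc using hc
  rw [alt_tri f _ (fun j : Fin n => GG x (n-1) j)
    (Matrix.of fun i k => if (k : ℕ) < i then c i k else if k = i then 1 else 0)]
  · rw [Matrix.det_of_lowerTriangular]
    · simp only [Matrix.of_apply, lt_irrefl, if_true, if_false, Finset.prod_const_one, one_mul]
      have := alt_expand n hn (fun k : ℤ => x ^ ((n : ℤ) - 1 + k).toNat) f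
      convert this using 2
      · funext j
        have := j.2
        simp only [GG, Algebra.smul_def, map_pow, map_neg, map_one]
        have h1 : ((n : ℤ) - 1 + -(j : ℤ)).toNat = n - 1 - j := by omega
        have h2 : ((n : ℤ) - 1 + (j : ℤ)).toNat = n - 1 + j := by omega
        rw [h1, h2]
      · congr 1
        funext j
        have := j.2
        congr 1
        omega
    · intro i k hik
      have hik : i < k := hik
      have h1 : ¬ ((k : ℕ) < i) := by have : (i : ℕ) < k := hik; omega
      rw [Matrix.of_apply, if_neg h1, if_neg hik.ne']
  · intro i
    have h : ∀ k : Fin n, (Matrix.of fun (i k : Fin n) => if (k : ℕ) < i then c i k else if k = i then 1 else 0) i k • GG x (n-1) (k : ℕ)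
       = (if (k : ℕ) < i then c i k • GG x (n-1) (k : ℕ) else 0) + if k = i then GG x (n-1) (k : ℕ) else 0 := by
      intro k
      simp only [Matrix.of_apply]
      by_cases h1 : (k : ℕ) < i
      · have : k ≠ i := by rintro rfl; omega
        simp [h1, this]
      · by_cases h2 : k = i <;> simp [h1, h2]
    rw [Finset.sum_congr rfl fun k _ => h k, Finset.sum_add_distrib]
    rw [Fin.sum_univ_eq_sum_range (fun k => if k < (i : ℕ) then c i k • GG x (n-1) k else 0) n]
    rw [← Finset.sum_filter]
    have : (Finset.range n).filter (fun k => k < (i : ℕ)) = Finset.range i := by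
      ext k; have := i.2; simp; omega
    rw [this, hc]
    simp

def blk {T : Type*} {n : ℕ} (p q : Fin n → T) (j : Fin (2 * n)) : T :=
  if h : (j : ℕ) < n then p ⟨j, h⟩ else q ⟨(j : ℕ) - n, by have := j.2; omega⟩

def inl' {n : ℕ} (k : Fin n) : Fin (2 * n) := ⟨k, by have := k.2; omega⟩
def inr' {n : ℕ} (k : Fin n) : Fin (2 * n) := ⟨n + k, by have := k.2; omega⟩

theorem blk_update_left {T : Type*} {n : ℕ} (p q : Fin n → T) (k : Fin n) (v : T) :
    blk (Function.update p k v) q = Function.update (blk p q) (inl' k) v := by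
  funext j
  simp only [blk, Function.update_apply, inl', Fin.ext_iff]
  by_cases h : (j : ℕ) < n
  · simp [h]
  · have := k.2
    rw [if_neg (by omega)]; simp [h]

theorem blk_update_right {T : Type*} {n : ℕ} (p q : Fin n → T) (k : Fin n) (v : T) :
    blk p (Function.update q k v) = Function.update (blk p q) (inr' k) v := by
  funext j
  simp only [blk, Function.update_apply, inr', Fin.ext_iff]
  by_cases h : (j : ℕ) < n
  · rw [if_neg (by omega)]; simp [h]
  · have : (j : ℕ) - n = k ↔ (j : ℕ) = n + k := by omega
    simp [h, this]

def altL {M : Type*} [AddCommGroup M] [Module R M] {n : ℕ} (D : M [⋀^Fin (2*n)]→ₗ[R] R)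
    (q : Fin n → M) : M [⋀^Fin n]→ₗ[R] R where
  toFun p := D (blk p q)
  map_update_add' p k v w := by
    rename_i inst
    rw [Subsingleton.elim inst (instDecidableEqFin n)]
    simp [blk_update_left]
  map_update_smul' p k c v := by
    rename_i inst
    rw [Subsingleton.elim inst (instDecidableEqFin n)]
    simp [blk_update_left]
  map_eq_zero_of_eq' p i j h hij := by
    refine D.map_eq_zero_of_eq (i := inl' i) (j := inl' j) _ ?_ ?_
    · simpa [blk, inl'] using h
    · intro h; apply hij; simpa [inl', Fin.ext_iff] using h

def altR {M : Type*} [AddCommGroup M] [Module R M] {n : ℕ} (D : M [⋀^Fin (2*n)]→ₗ[R] R)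
    (p : Fin n → M) : M [⋀^Fin n]→ₗ[R] R where
  toFun q := D (blk p q)
  map_update_add' p k v w := by
    rename_i inst
    rw [Subsingleton.elim inst (instDecidableEqFin n)]
    simp [blk_update_right]
  map_update_smul' p k c v := by
    rename_i inst
    rw [Subsingleton.elim inst (instDecidableEqFin n)]
    simp [blk_update_right]
  map_eq_zero_of_eq' p i j h hij := by
    refine D.map_eq_zero_of_eq (i := inr' i) (j := inr' j) _ ?_ ?_
    · simpa [blk, inr'] using h
    · intro h; apply hij; simpa [inr', Fin.ext_iff] using h

end aux

theorem Un_eq_Vdet (R : Type*) [CommRing R] (n : ℕ) (hn : 1 ≤ n)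
    (x a : Fin (2 * n) → R) :
    Un n x a = Vdet n x (fun i => 1 - x i ^ 2) a 1 := by
  let D : (Fin (2*n) → R) [⋀^Fin (2*n)]→ₗ[R] R := Matrix.detRowAlternating
  have hV : Vdet n x (fun i => 1 - x i ^ 2) a 1 =
      D (blk (fun j : Fin n => a * (x ^ (n - 1 - (j : ℕ)) * (1 - x ^ 2) ^ (j : ℕ)))
        (fun j : Fin n => x ^ (n - 1 - (j : ℕ)) * (1 - x ^ 2) ^ (j : ℕ))) := by
    rw [Vdet, ← Matrix.det_transpose]
    change Matrix.det _ = Matrix.det _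
    congr 1
    ext j i
    have := j.2
    by_cases h : (j : ℕ) < n
    · simp [blk, h, mul_assoc]
    · have e : 2 * n - 1 - (j : ℕ) = n - 1 - (j - n) := by omega
      simp [blk, h, e]
  have hU : ∀ α β : Fin n → ℕ, altDet n α β x a =
      D (blk (fun j : Fin n => a * x ^ α j) (fun j : Fin n => x ^ β j)) := by
    intro α β
    rw [altDet, ← Matrix.det_transpose]
    change Matrix.det _ = Matrix.det _
    congr 1
    ext j i
    by_cases h : (j : ℕ) < n <;> simp [blk, h]
  rw [hV, Un]
  have h1 := alt_main n hn x ((altL D (fun j : Fin n => x ^ (n - 1 - (j : ℕ)) * (1 - x ^ 2) ^ (j : ℕ))).compLinearMap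
    (LinearMap.mulLeft R a))
  refine Eq.trans ?_ h1.symm
  refine Finset.sum_congr rfl fun l _ => ?_
  have h2 := alt_main n hn x (altR D (fun j : Fin n => a * x ^ ((l j : ℕ) + (n - 1 - (j : ℕ)))))
  refine Eq.trans ?_ h2.symm
  refine Finset.sum_congr rfl fun m _ => ?_
  exact hU _ _
end

section
/- Let n ≥ 1 and let x_1,...,x_{2n}, a_1,...,a_{2n} be variables. Then U^n(X;A) = Σ_{I ⊆ [2n], |I|=n} (−1)^{Σ_{i∈I} i + n(n+1)/2} (Π_{i∈I} a_i) · Π_{i<j, i,j∈I}(x_i − x_j)(1 + x_i x_j) · Π_{i<j, i,j∈I^c}(x_i − x_j)(1 + x_i x_j). -/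
open Finset

lemma lw_poly (F : Type*) [Field F] : ∃ P : ℕ → Polynomial F, (∀ k, (P k).natDegree = k) ∧
    (∀ k, (P k).Monic) ∧ P 0 = 1 ∧
    ∀ k, 1 ≤ k → ∀ x : F, x ≠ 0 → (P k).eval (x - x⁻¹) = x ^ k + (-x⁻¹) ^ k := by
  let D : ℕ → Polynomial F := Polynomial.dickson 1 (-1)
  have hD : ∀ k, ((D (k+1)).natDegree = k + 1 ∧ (D (k+1)).Monic) ∧
      ((D (k+2)).natDegree = k + 2 ∧ (D (k+2)).Monic) := by
    intro k
    induction k with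
    | zero =>
      constructor
      · simp [D]
      · have : D 2 = Polynomial.X ^ 2 + Polynomial.C 2 := by
          simp only [D, Polynomial.dickson_two]; simp; norm_num [Polynomial.C_ofNat]
        constructor
        · rw [this]; compute_degree!
        · rw [this]; monicity!
    | succ k ih =>
      refine ⟨ih.2, ?_⟩
      have h : D (k+1+2) = Polynomial.X * D (k+2) + D (k+1) := by
        simp [D, Polynomial.dickson_add_two]
      have hm : (Polynomial.X * D (k+2)).Monic := Polynomial.monic_X.mul ih.2.2
      have hd : (Polynomial.X * D (k+2)).natDegree = k + 3 := by
        rw [Polynomial.natDegree_X_mul ih.2.2.ne_zero, ih.2.1]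
      have hlt : (D (k+1)).natDegree < (Polynomial.X * D (k+2)).natDegree := by
        rw [hd, ih.1.1]; omega
      rw [h]
      refine ⟨?_, ?_⟩
      · rw [Polynomial.natDegree_add_eq_left_of_natDegree_lt hlt, hd]
      · exact hm.add_of_left (Polynomial.degree_lt_degree hlt)
  have hE : ∀ x : F, x ≠ 0 → ∀ k, (D k).eval (x - x⁻¹) = x ^ k + (-x⁻¹) ^ k ∧
      (D (k+1)).eval (x - x⁻¹) = x ^ (k+1) + (-x⁻¹) ^ (k+1) := by
    intro x hx k
    induction k with
    | zero => 
      constructor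
      · simp [D]; norm_num
      · simp [D]; ring
    | succ k ih =>
      refine ⟨ih.2, ?_⟩
      have h : D (k+1+1) = Polynomial.X * D (k+1) + D k := by
        simp [D, Polynomial.dickson_add_two]
      rw [h, Polynomial.eval_add, Polynomial.eval_mul, ih.1, ih.2, Polynomial.eval_X]
      have h1 : x * x⁻¹ = 1 := mul_inv_cancel₀ hx
      linear_combination (-(-x⁻¹)^k - x^k) * h1
  refine ⟨fun k => if k = 0 then 1 else D k, ?_, ?_, by simp, ?_⟩
  · rintro (_ | k)
    · simp
    · simpa using (hD k).1.1
  · rintro (_ | k)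
    · simp
    · simpa using (hD k).1.2
  · rintro (_ | k) hk x hx
    · omega
    · simpa using (hE x hx (k+1)).1

lemma lw_det_field (F : Type*) [Field F] (n : ℕ) (x : Fin n → F) (hx : ∀ i, x i ≠ 0) :
    Matrix.det (Matrix.of fun i k : Fin n => x i ^ (n - 1 + (k:ℕ)) +
      (if (k:ℕ) = 0 then 0 else (-1) ^ (k:ℕ) * x i ^ (n - 1 - (k:ℕ)))) =
    ∏ i, ∏ j ∈ Ioi i, ((x j - x i) * (1 + x i * x j)) := by
  obtain ⟨P, hd, hm, h0, he⟩ := lw_poly F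
  have key := Matrix.det_eval_matrixOfPolynomials_eq_det_vandermonde (fun i => x i - (x i)⁻¹)
    (fun k : Fin n => P k) (fun k => hd k) (fun k => hm k)
  have h1 : (Matrix.of fun i k : Fin n => x i ^ (n - 1 + (k:ℕ)) +
      (if (k:ℕ) = 0 then 0 else (-1) ^ (k:ℕ) * x i ^ (n - 1 - (k:ℕ)))) =
      Matrix.of fun i k : Fin n => x i ^ (n-1) * (Matrix.of (fun i (j : Fin n) => ((P j).eval (x i - (x i)⁻¹)))) i k := by
    ext i k
    simp only [Matrix.of_apply]
    by_cases hk : (k:ℕ) = 0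
    · simp [hk, h0]
    · rw [he k (by omega) _ (hx i), if_neg hk, mul_add, ← pow_add]
      congr 1
      have : n - 1 = (n - 1 - k) + k := by have := k.2; omega
      conv_rhs => rw [this, pow_add]
      rw [neg_pow (x i)⁻¹, inv_pow]
      field_simp [hx i]
  rw [h1, Matrix.det_mul_column, ← key, Matrix.det_vandermonde]
  have h2 : ∀ y : Fin n → F, (∏ i, y i ^ (n-1)) = ∏ i, ∏ j ∈ Ioi i, (y i * y j) := by
    intro y
    simp_rw [Finset.prod_mul_distrib]
    have : ∏ i : Fin n, ∏ j ∈ Ioi i, y j = ∏ i : Fin n, ∏ j ∈ Iio i, y i := by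
      apply Finset.prod_comm'
      simp
    rw [this, ← Finset.prod_mul_distrib]
    apply Finset.prod_congr rfl
    intro i _
    simp only [Finset.prod_const, Fin.card_Ioi, Fin.card_Iio]
    rw [← pow_add]
    congr 1
    have := i.2
    omega
  rw [h2, ← Finset.prod_mul_distrib]
  apply Finset.prod_congr rfl
  intro i _
  rw [← Finset.prod_mul_distrib]
  apply Finset.prod_congr rfl
  intro j _
  field_simp [hx i, hx j]
  ring

lemma lw_hom1 {S T : Type*} [CommRing S] [CommRing T] (f : S →+* T) (n : ℕ) (y : Fin n → S) :
    f (Matrix.det (Matrix.of fun i k : Fin n => y i ^ (n - 1 + (k:ℕ)) +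
      (if (k:ℕ) = 0 then 0 else (-1) ^ (k:ℕ) * y i ^ (n - 1 - (k:ℕ))))) =
    Matrix.det (Matrix.of fun i k : Fin n => f (y i) ^ (n - 1 + (k:ℕ)) +
      (if (k:ℕ) = 0 then 0 else (-1) ^ (k:ℕ) * f (y i) ^ (n - 1 - (k:ℕ)))) := by
  rw [RingHom.map_det]
  congr 1
  ext i k
  simp only [RingHom.mapMatrix_apply, Matrix.map_apply, Matrix.of_apply, map_add, map_pow]
  split_ifs <;> simp

lemma lw_hom2 {S T : Type*} [CommRing S] [CommRing T] (f : S →+* T) (n : ℕ) (y : Fin n → S) :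
    f (∏ i, ∏ j ∈ Ioi i, ((y j - y i) * (1 + y i * y j))) =
    ∏ i, ∏ j ∈ Ioi i, ((f (y j) - f (y i)) * (1 + f (y i) * f (y j))) := by
  simp [map_prod]

lemma lw_det (R : Type*) [CommRing R] (n : ℕ) (x : Fin n → R) :
    Matrix.det (Matrix.of fun i k : Fin n => x i ^ (n - 1 + (k:ℕ)) +
      (if (k:ℕ) = 0 then 0 else (-1) ^ (k:ℕ) * x i ^ (n - 1 - (k:ℕ)))) =
    ∏ i, ∏ j ∈ Ioi i, ((x j - x i) * (1 + x i * x j)) := by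
  have hA : Matrix.det (Matrix.of fun i k : Fin n =>
      (MvPolynomial.X i : MvPolynomial (Fin n) ℤ) ^ (n - 1 + (k:ℕ)) +
      (if (k:ℕ) = 0 then 0 else (-1) ^ (k:ℕ) *
        (MvPolynomial.X i : MvPolynomial (Fin n) ℤ) ^ (n - 1 - (k:ℕ)))) =
    ∏ i, ∏ j ∈ Ioi i, (((MvPolynomial.X j : MvPolynomial (Fin n) ℤ) - MvPolynomial.X i) *
      (1 + MvPolynomial.X i * MvPolynomial.X j)) := by
    apply IsFractionRing.injective (MvPolynomial (Fin n) ℤ) (FractionRing (MvPolynomial (Fin n) ℤ))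
    rw [lw_hom1, lw_hom2]
    apply lw_det_field
    intro i h
    rw [map_eq_zero_iff _ (IsFractionRing.injective (MvPolynomial (Fin n) ℤ)
      (FractionRing (MvPolynomial (Fin n) ℤ)))] at h
    exact MvPolynomial.X_ne_zero i h
  have := congrArg (MvPolynomial.eval₂Hom (Int.castRingHom R) x) hA
  rw [lw_hom1, lw_hom2] at this
  simpa using this

lemma lw_initial {n : ℕ} (P : Fin n → Prop) [DecidablePred P]
    (h : ∀ i j, i ≤ j → P j → P i) (c : ℕ) (hc : (univ.filter P).card = c) (j : Fin n) :
    P j ↔ (j:ℕ) < c := by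
  constructor
  · intro hj
    have : Iic j ⊆ univ.filter P := fun i hi => by
      simp only [mem_filter, mem_univ, true_and]
      exact h i j (mem_Iic.1 hi) hj
    have := card_le_card this
    rw [Fin.card_Iic] at this
    omega
  · intro hj
    by_contra hP
    have : univ.filter P ⊆ Iio j := fun i hi => by
      simp only [mem_filter, mem_univ, true_and] at hi
      rw [mem_Iio]
      by_contra hij
      exact hP (h j i (not_lt.1 hij) hi)
    have := card_le_card this
    rw [Fin.card_Iio] at this
    omega

/-- exponents attached to a subset -/
def lwF (n : ℕ) (s : Finset (Fin n)) (k : Fin n) : ℕ :=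
  if k ∈ s then n - 1 + (k:ℕ) else n - 1 - (k:ℕ)

/-- exponents attached to a partition -/
def lwE {n : ℕ} (l : Fin n → Fin n) (j : Fin n) : ℕ := (l j : ℕ) + (n - 1 - (j : ℕ))

lemma lwF_inj (n : ℕ) (s : Finset (Fin n)) : Function.Injective (lwF n s) := by
  intro k m h
  have := k.2
  have := m.2
  unfold lwF at h
  by_cases hk : k ∈ s <;> by_cases hm : m ∈ s <;> simp only [hk, hm, if_true, if_false] at h
  · ext; omega
  · ext; omega
  · ext; omega
  · ext; omega

lemma lwE_anti {n : ℕ} {l : Fin n → Fin n} (hl : ∀ i j : Fin n, i ≤ j → l j ≤ l i) :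
    StrictAnti (lwE l) := by
  intro i j hij
  have h1 := hl i j hij.le
  have := j.2
  unfold lwE
  have h2 : (l j : ℕ) ≤ l i := h1
  have h3 : (i:ℕ) < j := hij
  omega

lemma lwE_sum {n : ℕ} {l : Fin n → Fin n} (hl : l ∈ frobeniusSet n) :
    ∀ i j : Fin n, i ≠ j → lwE l i + lwE l j ≠ 2 * (n - 1) := by
  simp only [frobeniusSet, mem_filter, mem_univ, true_and] at hl
  obtain ⟨ha, hf⟩ := hl
  have main : ∀ i j : Fin n, i < j → lwE l i + lwE l j ≠ 2 * (n - 1) := by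
    intro i j hij h
    have hlt := lwE_anti ha hij
    unfold lwE at hlt h
    have hi := i.2
    have hj := j.2
    have h1 : (i:ℕ) + 1 ≤ l i := by omega
    have := lw_initial (fun j : Fin n => (i:ℕ) + 1 ≤ (l j : ℕ))
      (fun a b hab hb => le_trans hb (ha a b hab)) _ (hf i h1) j
    omega
  intro i j hij
  rcases lt_or_gt_of_ne hij with h | h
  · exact main i j h
  · rw [add_comm]; exact main j i h

/-- subset attached to a partition -/
def lwS {n : ℕ} (l : Fin n → Fin n) : Finset (Fin n) :=
  univ.filter fun k => ∃ j, lwE l j = n - 1 + (k:ℕ)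

lemma lw_perm {n : ℕ} {l : Fin n → Fin n} (hl : l ∈ frobeniusSet n) :
    ∃ σ : Equiv.Perm (Fin n), ∀ k, lwF n (lwS l) k = lwE l (σ k) := by
  have hs := lwE_sum hl
  simp only [frobeniusSet, mem_filter, mem_univ, true_and] at hl
  have hE := lwE_anti hl.1
  have hb : ∀ j : Fin n, lwE l j ≤ 2 * (n - 1) := by
    intro j
    have := j.2
    have := (l j).2
    unfold lwE
    omega
  let g : Fin n → Fin n := fun j =>
    ⟨(lwE l j - (n-1)) + ((n - 1) - lwE l j), by
      have := hb j; have := j.2; omega⟩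
  have hg : Function.Injective g := by
    intro i j hij
    by_contra hne
    have h1 := hs i j hne
    have h2 := hE.injective.ne hne
    simp only [g, Fin.mk.injEq] at hij
    omega
  let τ := Equiv.ofBijective g (Finite.injective_iff_bijective.1 hg)
  have key : ∀ j, lwF n (lwS l) (g j) = lwE l j := by
    intro j
    unfold lwF
    have hjb := hb j
    by_cases hj : n - 1 ≤ lwE l j
    · rw [if_pos]
      · simp only [g]; omega
      · simp only [lwS, mem_filter, mem_univ, true_and]
        refine ⟨j, ?_⟩
        simp only [g]; omega
    · rw [if_neg]
      · simp only [g]; omega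
      · simp only [lwS, mem_filter, mem_univ, true_and]
        rintro ⟨i, hi⟩
        simp only [g] at hi
        apply hs i j
        · rintro rfl
          omega
        · omega
  refine ⟨τ.symm, fun k => ?_⟩
  have := key (τ.symm k)
  rw [← this]
  congr 1
  exact (τ.apply_symm_apply k).symm

lemma lwS_inj {n : ℕ} {l l' : Fin n → Fin n} (hl : l ∈ frobeniusSet n)
    (hl' : l' ∈ frobeniusSet n) (h : lwS l = lwS l') : l = l' := by
  obtain ⟨σ, hσ⟩ := lw_perm hl
  obtain ⟨σ', hσ'⟩ := lw_perm hl'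
  simp only [frobeniusSet, mem_filter, mem_univ, true_and] at hl hl'
  have hr : Set.range (lwE l) = Set.range (lwE l') := by
    have h1 : lwE l ∘ σ = lwE l' ∘ σ' := by
      ext k
      simp only [Function.comp]
      rw [← hσ, ← hσ', h]
    have h2 : Set.range (lwE l ∘ σ) = Set.range (lwE l' ∘ σ') := by rw [h1]
    rwa [σ.surjective.range_comp, σ'.surjective.range_comp] at h2
  have he : lwE l = lwE l' := by
    have m1 : StrictMono (fun j => OrderDual.toDual (lwE l j)) := (lwE_anti hl.1).dual_right
    have m2 : StrictMono (fun j => OrderDual.toDual (lwE l' j)) := (lwE_anti hl'.1).dual_right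
    have := (StrictMono.range_inj m1 m2).1 hr
    exact this
  ext j
  have := congrFun he j
  unfold lwE at this
  omega

lemma lwS_zero {n : ℕ} (hn : 1 ≤ n) {l : Fin n → Fin n} (hl : l ∈ frobeniusSet n) :
    (⟨0, hn⟩ : Fin n) ∈ lwS l := by
  obtain ⟨σ, hσ⟩ := lw_perm hl
  simp only [lwS, mem_filter, mem_univ, true_and]
  refine ⟨σ ⟨0, hn⟩, ?_⟩
  rw [← hσ]
  simp [lwF]

lemma lwS_surj {n : ℕ} (hn : 1 ≤ n) (s : Finset (Fin n)) (h0 : (⟨0, hn⟩ : Fin n) ∈ s) :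
    ∃ l ∈ frobeniusSet n, lwS l = s := by
  let τ : Equiv.Perm (Fin n) := Fin.revPerm.trans (Tuple.sort (lwF n s))
  let e : Fin n → ℕ := fun j => lwF n s (τ j)
  have hanti : StrictAnti e := by
    have hm : Monotone (lwF n s ∘ Tuple.sort (lwF n s)) := Tuple.monotone_sort _
    have hm' : StrictMono (lwF n s ∘ Tuple.sort (lwF n s)) :=
      hm.strictMono_of_injective ((lwF_inj n s).comp (Tuple.sort (lwF n s)).injective)
    intro i j hij
    exact hm' (Fin.rev_lt_rev.2 hij)
  have hF : ∀ k, lwF n s k ≤ 2 * (n-1) := by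
    intro k
    unfold lwF
    have := k.2
    split_ifs <;> omega
  -- gap bounds
  have hgap : ∀ d : ℕ, ∀ i j : Fin n, (i:ℕ) + d = j → e j + d ≤ e i := by
    intro d
    induction d with
    | zero => intro i j h; have : i = j := by ext; omega
              subst this; simp
    | succ d ih =>
      intro i j h
      have hj := j.2
      have h1 := ih i ⟨(i:ℕ) + d, by omega⟩ rfl
      have h2 : e j < e ⟨(i:ℕ) + d, by omega⟩ := hanti (by
        rw [Fin.lt_def]; simp; omega)
      omega
  have hlow : ∀ j : Fin n, n - 1 - (j:ℕ) ≤ e j := by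
    intro j
    have := hgap (n - 1 - j) j ⟨n-1, by omega⟩ (by simp; omega)
    omega
  have hhigh : ∀ j : Fin n, e j + j ≤ 2 * (n-1) := by
    intro j
    have := hgap j ⟨0, hn⟩ j (by simp)
    have := hF (τ ⟨0, hn⟩)
    have : e ⟨0, hn⟩ ≤ 2 * (n-1) := this
    omega
  let l : Fin n → Fin n := fun j => ⟨e j - (n - 1 - (j:ℕ)), by
    have := hhigh j; have := j.2; omega⟩
  have hle : ∀ j, lwE l j = e j := by
    intro j
    have := hlow j
    simp only [lwE, l]
    omega
  have hl1 : ∀ i j : Fin n, i ≤ j → l j ≤ l i := by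
    intro i j hij
    have hij' : (i:ℕ) ≤ j := hij
    have := hgap (j - i) i j (by omega)
    rw [Fin.le_def]
    simp only [l]
    have := j.2
    omega
  have hS : lwS l = s := by
    ext k
    simp only [lwS, mem_filter, mem_univ, true_and, hle]
    have hk := k.2
    constructor
    · rintro ⟨j, hj⟩
      simp only [e, lwF] at hj
      have := (τ j).2
      split_ifs at hj with h
      · have : τ j = k := by ext; omega
        rwa [this] at h
      · have : τ j = k := by ext; omega
        have : k = ⟨0, hn⟩ := by ext; simp; omega
        rw [this]; exact h0
    · intro hks
      refine ⟨τ.symm k, ?_⟩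
      simp [e, lwF, hks]
  refine ⟨l, ?_, hS⟩
  simp only [frobeniusSet, mem_filter, mem_univ, true_and]
  refine ⟨hl1, ?_⟩
  intro i hi
  have hi2 := i.2
  have hli := (l i).2
  have hei := hle i
  unfold lwE at hei
  -- k = l i - i
  let k : Fin n := ⟨(l i : ℕ) - i, by omega⟩
  have hkv : (k:ℕ) = (l i : ℕ) - i := rfl
  have hks : k ∈ s := by
    rw [← hS]
    simp only [lwS, mem_filter, mem_univ, true_and]
    refine ⟨i, ?_⟩
    rw [hle, ← hei, hkv]; omega
  have c1 : (s.filter fun m => k < m).card = i := by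
    rw [← Fin.card_Iio i, ← Finset.card_map (s := Iio i) τ.toEmbedding]
    congr 1
    ext m
    simp only [mem_filter, mem_map, mem_Iio, Equiv.coe_toEmbedding]
    have hm := m.2
    constructor
    · rintro ⟨hms, hkm⟩
      refine ⟨τ.symm m, ?_, by simp⟩
      rw [← hanti.lt_iff_gt, ← hei]
      have : e (τ.symm m) = n - 1 + m := by simp [e, lwF, hms]
      rw [this]
      rw [Fin.lt_def, hkv] at hkm
      omega
    · rintro ⟨j, hj, rfl⟩
      have h1 := hanti hj
      rw [← hei] at h1
      simp only [e, lwF] at h1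
      split_ifs at h1 with h
      · refine ⟨h, ?_⟩
        rw [Fin.lt_def, hkv]; omega
      · omega
  have c2 : (univ.filter fun j => n - 1 - (k:ℕ) < e j).card = (l i : ℕ) + 1 := by
    have : (univ.filter fun j => n - 1 - (k:ℕ) < e j).map τ.toEmbedding =
        Iic k ∪ (s.filter fun m => k < m) := by
      ext m
      simp only [mem_union, mem_filter, mem_map, mem_Iic, Equiv.coe_toEmbedding, mem_univ, true_and]
      have hm := m.2
      have hkn := k.2
      have : (∃ a, n - 1 - (k:ℕ) < e a ∧ τ a = m) ↔ n - 1 - (k:ℕ) < lwF n s m := by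
        constructor
        · rintro ⟨a, ha, rfl⟩; exact ha
        · intro h; exact ⟨τ.symm m, by simpa [e] using h, by simp⟩
      rw [this]
      unfold lwF
      rw [Fin.le_def, Fin.lt_def]
      by_cases hms : m ∈ s
      · simp only [hms, if_true, true_and]
        omega
      · simp only [hms, if_false, false_and, or_false]
        have : (m:ℕ) ≠ k := fun h => hms (by
          have : m = k := by ext; exact h
          rwa [this])
        omega
    rw [← Finset.card_map τ.toEmbedding, this, card_union_of_disjoint, c1, Fin.card_Iic, hkv]
    · omega
    · rw [Finset.disjoint_left]
      intro m h1 h2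
      simp only [mem_filter, mem_Iic] at h1 h2
      exact absurd h2.2 (not_lt.2 h1)
  have c3 := lw_initial _ (fun a b hab hb => lt_of_lt_of_le hb (hanti.antitone hab)) _ c2
  have hset : (univ.filter fun j : Fin n => (i:ℕ) + 1 ≤ (l j : ℕ)) = Iic (l i) := by
    ext j
    simp only [mem_filter, mem_univ, true_and, mem_Iic]
    have hj := j.2
    constructor
    · intro hij
      by_contra hlt
      rw [not_le, Fin.lt_def] at hlt
      have hb := (c3 ⟨(l i : ℕ) + 1, by omega⟩).not.2 (by simp)
      have hbe := hle ⟨(l i : ℕ) + 1, by omega⟩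
      have hlj := hl1 ⟨(l i : ℕ) + 1, by omega⟩ j (by rw [Fin.le_def]; simp; omega)
      rw [Fin.le_def] at hlj
      unfold lwE at hbe
      simp only at hbe hb
      -- e ≠ n-1-k
      have hne : e ⟨(l i : ℕ) + 1, by omega⟩ ≠ n - 1 - (k:ℕ) := by
        intro h
        simp only [e, lwF] at h
        have := (τ ⟨(l i : ℕ) + 1, by omega⟩).2
        have := k.2
        split_ifs at h with h'
        · omega
        · apply h'
          have : τ ⟨(l i : ℕ) + 1, by omega⟩ = k := by ext; omega
          rwa [this]
      omega
    · intro hij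
      rw [Fin.le_def] at hij
      have hb := (c3 (l i)).2 (by omega)
      have hbe := hle (l i)
      unfold lwE at hbe
      have hlj := hl1 j (l i) hij
      rw [Fin.le_def] at hlj
      omega
  rw [hset, Fin.card_Iic]

lemma littlewood (R : Type*) [CommRing R] (n : ℕ) (hn : 1 ≤ n) (x : Fin n → R) :
    ∑ l ∈ frobeniusSet n, Matrix.det (Matrix.of fun i j : Fin n => x i ^ lwE l j) =
    ∏ i, ∏ j ∈ Ioi i, ((x i - x j) * (1 + x i * x j)) := by
  have hneg : ∏ i, ∏ j ∈ Ioi i, ((x i - x j) * (1 + x i * x j)) =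
      (∏ k : Fin n, (-1 : R) ^ (k:ℕ)) * ∏ i, ∏ j ∈ Ioi i, ((x j - x i) * (1 + x i * x j)) := by
    have : (∏ k : Fin n, (-1 : R) ^ (k:ℕ)) = ∏ i : Fin n, ∏ j ∈ Ioi i, (-1 : R) := by
      have h : ∏ i : Fin n, ∏ j ∈ Ioi i, (-1 : R) = ∏ j : Fin n, ∏ i ∈ Iio j, (-1 : R) := by
        apply Finset.prod_comm'; simp
      rw [h]
      simp
    rw [this, ← Finset.prod_mul_distrib]
    refine prod_congr rfl fun i _ => ?_
    rw [← Finset.prod_mul_distrib]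
    refine prod_congr rfl fun j _ => ?_
    ring
  rw [hneg, ← lw_det, ← Matrix.det_transpose]
  have hadd := (Matrix.detRowAlternating (R := R) (n := Fin n)).map_add_univ
    (fun k i => x i ^ (n - 1 + (k:ℕ)))
    (fun k i => if (k:ℕ) = 0 then 0 else (-1) ^ (k:ℕ) * x i ^ (n - 1 - (k:ℕ)))
  have hadd' : Matrix.det (Matrix.of fun i k : Fin n => x i ^ (n - 1 + (k:ℕ)) +
      (if (k:ℕ) = 0 then 0 else (-1) ^ (k:ℕ) * x i ^ (n - 1 - (k:ℕ)))).transpose =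
      ∑ s : Finset (Fin n), Matrix.det (Matrix.of (s.piecewise
        (fun k i => x i ^ (n - 1 + (k:ℕ)))
        (fun k i => if (k:ℕ) = 0 then 0 else (-1) ^ (k:ℕ) * x i ^ (n - 1 - (k:ℕ))))) := hadd
  rw [hadd', Finset.mul_sum]
  have hsub : ∑ s : Finset (Fin n), (∏ k : Fin n, (-1 : R) ^ (k:ℕ)) * Matrix.det (Matrix.of (s.piecewise
        (fun k i => x i ^ (n - 1 + (k:ℕ)))
        (fun k i => if (k:ℕ) = 0 then 0 else (-1) ^ (k:ℕ) * x i ^ (n - 1 - (k:ℕ))))) =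
      ∑ s ∈ univ.filter (fun s : Finset (Fin n) => (⟨0, hn⟩ : Fin n) ∈ s),
      (∏ k : Fin n, (-1 : R) ^ (k:ℕ)) * Matrix.det (Matrix.of (s.piecewise
        (fun k i => x i ^ (n - 1 + (k:ℕ)))
        (fun k i => if (k:ℕ) = 0 then 0 else (-1) ^ (k:ℕ) * x i ^ (n - 1 - (k:ℕ))))) := by
    symm
    apply Finset.sum_subset (filter_subset _ _)
    intro s _ hs
    simp only [mem_filter, mem_univ, true_and] at hs
    rw [Matrix.det_eq_zero_of_row_eq_zero (⟨0, hn⟩ : Fin n), mul_zero]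
    intro i
    simp [hs]
  rw [hsub]
  refine Finset.sum_bij (fun l _ => lwS l) ?_ ?_ ?_ ?_
  · intro l hl
    simpa using lwS_zero hn hl
  · intro l hl l' hl' h
    exact lwS_inj hl hl' h
  · intro s hs
    simp only [mem_filter, mem_univ, true_and] at hs
    obtain ⟨l, hl, h⟩ := lwS_surj hn s hs
    exact ⟨l, hl, h⟩
  · intro l hl
    obtain ⟨σ, hσ⟩ := lw_perm hl
    have hz := lwS_zero hn hl
    have hanti : StrictAnti (lwE l) := by
      simp only [frobeniusSet, mem_filter, mem_univ, true_and] at hl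
      exact lwE_anti hl.1
    generalize lwS l = s at hσ hz
    have hM : Matrix.of (s.piecewise
        (fun k i => x i ^ (n - 1 + (k:ℕ)))
        (fun k i => if (k:ℕ) = 0 then 0 else (-1) ^ (k:ℕ) * x i ^ (n - 1 - (k:ℕ)))) =
        Matrix.of fun k i => (if k ∈ s then 1 else (-1) ^ (k:ℕ)) *
          (Matrix.submatrix (Matrix.of fun i j : Fin n => x i ^ lwE l j).transpose σ id) k i := by
      ext k i
      simp only [Matrix.of_apply, Matrix.submatrix_apply, Matrix.transpose_apply, id]
      rw [← hσ]
      by_cases hk : k ∈ s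
      · simp [hk, lwF]
      · have : (k:ℕ) ≠ 0 := fun h => hk (by
          have : k = ⟨0, hn⟩ := by ext; simpa using h
          rwa [this])
        simp [hk, lwF, this]
    rw [hM, Matrix.det_mul_column, Matrix.det_permute, Matrix.det_transpose]
    have hsign : ((Equiv.Perm.sign σ : ℤ) : R) = ∏ k : Fin n, (if k ∈ s then (-1) ^ (k:ℕ) else 1) := by
      rw [Equiv.Perm.sign_eq_prod_prod_Iio]
      push_cast
      refine prod_congr rfl fun j _ => ?_
      have : ∀ i ∈ Iio j, (((if σ i < σ j then (1:ℤˣ) else -1 : ℤˣ) : ℤ) : R) = if j ∈ s then -1 else 1 := by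
        intro i hi
        rw [mem_Iio, Fin.lt_def] at hi
        have hj := j.2
        have h1 : σ i < σ j ↔ j ∉ s := by
          rw [← hanti.lt_iff_gt, ← hσ, ← hσ]
          unfold lwF
          split_ifs <;> simp_all <;> omega
        by_cases hjs : j ∈ s
        · rw [if_neg (by rw [h1]; simpa using hjs)]; simp [hjs]
        · rw [if_pos (h1.2 hjs)]; simp [hjs]
      rw [prod_congr rfl this]
      split_ifs <;> simp
    rw [hsign, ← mul_assoc, ← mul_assoc, ← Finset.prod_mul_distrib, ← Finset.prod_mul_distrib]
    rw [Finset.prod_eq_one, one_mul]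
    intro k _
    split_ifs <;> simp [← mul_pow]

lemma lp_count {N n : ℕ} (I : Finset (Fin N)) (h : I.card = n) (p : Fin n) :
    (Iᶜ.filter (fun c => c < I.orderEmbOfFin h p)).card + (p:ℕ) = (I.orderEmbOfFin h p : ℕ) := by
  have h1 : (I.filter (fun c => c < I.orderEmbOfFin h p)).card = p := by
    rw [← Fin.card_Iio p, ← Finset.card_map (s := Iio p) (I.orderEmbOfFin h).toEmbedding]
    congr 1
    ext c
    simp only [mem_filter, mem_map, mem_Iio, RelEmbedding.coe_toEmbedding]
    constructor
    · rintro ⟨hc, hlt⟩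
      have : c ∈ Set.range (I.orderEmbOfFin h) := by rw [range_orderEmbOfFin]; exact hc
      obtain ⟨q, rfl⟩ := this
      exact ⟨q, by simpa using hlt, rfl⟩
    · rintro ⟨q, hq, rfl⟩
      exact ⟨orderEmbOfFin_mem _ _ _, by simpa using hq⟩
  have h2 : (Iio (I.orderEmbOfFin h p)).card = (I.orderEmbOfFin h p : ℕ) := Fin.card_Iio _
  have h3 : Iio (I.orderEmbOfFin h p) = Iᶜ.filter (fun c => c < I.orderEmbOfFin h p) ∪
      I.filter (fun c => c < I.orderEmbOfFin h p) := by
    rw [← filter_union]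
    ext c
    simp
    tauto
  rw [← h2, h3, card_union_of_disjoint, h1]
  apply disjoint_filter_filter
  exact disjoint_compl_left

/-- block ordering of the columns -/
def lpF (n : ℕ) : Fin n ⊕ Fin n ≃ Fin (2 * n) :=
  finSumFinEquiv.trans (finCongr (two_mul n).symm)

lemma lpF_inl (n : ℕ) (p : Fin n) : ((lpF n (Sum.inl p) : Fin (2*n)) : ℕ) = p := by
  simp [lpF]

lemma lpF_inr (n : ℕ) (p : Fin n) : ((lpF n (Sum.inr p) : Fin (2*n)) : ℕ) = n + p := by
  simp [lpF, add_comm]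

lemma lp_prod_range {N n : ℕ} {M : Type*} [CommMonoid M] (I : Finset (Fin N)) (h : I.card = n)
    (f : Fin N → M) : ∏ p : Fin n, f (I.orderEmbOfFin h p) = ∏ i ∈ I, f i := by
  conv_rhs => rw [← Finset.map_orderEmbOfFin_univ I h, Finset.prod_map]
  rfl

lemma lp_sum_range {N n : ℕ} {M : Type*} [AddCommMonoid M] (I : Finset (Fin N)) (h : I.card = n)
    (f : Fin N → M) : ∑ p : Fin n, f (I.orderEmbOfFin h p) = ∑ i ∈ I, f i := by
  conv_rhs => rw [← Finset.map_orderEmbOfFin_univ I h, Finset.sum_map]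
  rfl

lemma lp_prod2 {N n : ℕ} {M : Type*} [CommMonoid M] (I : Finset (Fin N)) (h : I.card = n)
    (f : Fin N → Fin N → M) :
    ∏ p : Fin n, ∏ q ∈ Ioi p, f (I.orderEmbOfFin h p) (I.orderEmbOfFin h q) =
      ∏ i ∈ I, ∏ j ∈ I.filter (fun j => i < j), f i j := by
  rw [← lp_prod_range I h]
  refine prod_congr rfl fun p _ => ?_
  rw [Finset.prod_filter, ← lp_prod_range I h, ← Finset.prod_filter]
  refine prod_congr ?_ fun _ _ => rfl
  ext q
  simp

lemma lp_sign (n : ℕ) (I : Finset (Fin (2 * n))) (h : I.card = n) (h' : Iᶜ.card = n) :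
    (((Equiv.Perm.sign ((lpF n).symm.trans (finSumEquivOfFinset h h')) : ℤˣ) : ℤ)) =
      (-1) ^ ((∑ i ∈ I, ((i : ℕ) + 1)) + n * (n + 1) / 2) := by
  set π := (lpF n).symm.trans (finSumEquivOfFinset h h') with hπ
  have hπF : ∀ u, π (lpF n u) = finSumEquivOfFinset h h' u := by intro u; simp [hπ]
  rw [Equiv.Perm.sign_eq_prod_prod_Ioi]
  have e1 : ∀ p : Fin (2*n), ∏ q ∈ Ioi p, (if π p < π q then (1:ℤˣ) else -1) =
      ∏ q, (if p < q ∧ ¬ π p < π q then (-1:ℤˣ) else 1) := by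
    intro p
    have : Ioi p = univ.filter (fun q => p < q) := by ext; simp
    rw [this, Finset.prod_filter]
    refine prod_congr rfl fun q _ => ?_
    by_cases h1 : p < q <;> by_cases h2 : π p < π q <;> simp [h1, h2]
  simp_rw [e1]
  rw [← (lpF n).prod_comp]
  simp_rw [← (lpF n).prod_comp (fun q => if _ < q ∧ ¬ π _ < π q then (-1:ℤˣ) else 1), hπF]
  rw [Fintype.prod_sum_type]
  simp only [Fintype.prod_sum_type]
  simp only [finSumEquivOfFinset_inl, finSumEquivOfFinset_inr, Fin.lt_def (a := lpF n _),
    lpF_inl, lpF_inr, OrderEmbedding.lt_iff_lt]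
  have t1 : ∀ p q : Fin n, ((p:ℕ) < q ∧ ¬ p < q) ↔ False := by intro p q; simp
  have t2 : ∀ p q : Fin n, (n + (p:ℕ) < n + q ∧ ¬ p < q) ↔ False := by intro p q; simp
  have t3 : ∀ p q : Fin n, (n + (p:ℕ) < q) ↔ False := by intro p q; simp; omega
  have t4 : ∀ p q : Fin n, ((p:ℕ) < n + q) ↔ True := by intro p q; simp; omega
  simp only [t1, t2, t3, t4, if_false, prod_const_one, one_mul, mul_one, true_and, false_and]
  have e2 : ∀ p : Fin n, ∏ q : Fin n,
      (if ¬ I.orderEmbOfFin h p < Iᶜ.orderEmbOfFin h' q then (-1:ℤˣ) else 1) =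
      (-1) ^ ((I.orderEmbOfFin h p : ℕ) + p) := by
    intro p
    rw [lp_prod_range Iᶜ h' (fun c => if ¬ I.orderEmbOfFin h p < c then (-1:ℤˣ) else 1)]
    rw [← Finset.prod_filter, Finset.prod_const]
    have : Iᶜ.filter (fun c => ¬ I.orderEmbOfFin h p < c) =
        Iᶜ.filter (fun c => c < I.orderEmbOfFin h p) := by
      apply filter_congr
      intro c hc
      rw [not_lt, le_iff_lt_or_eq]
      constructor
      · rintro (h1 | h1)
        · exact h1
        · subst h1
          exact absurd (orderEmbOfFin_mem _ _ _) (mem_compl.1 hc)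
      · exact Or.inl
    rw [this, ← lp_count I h p, add_assoc, pow_add _ _ (_ + _), ← two_mul, pow_mul]
    simp
  simp_rw [e2]
  rw [Finset.prod_pow_eq_pow_sum, Finset.sum_add_distrib, lp_sum_range I h (fun i => (i:ℕ)),
    Finset.sum_add_distrib, Fin.sum_univ_eq_sum_range (fun i => i) n]
  push_cast
  have hc : ∑ i ∈ I, 1 = n := by simp [h]
  rw [hc]
  have g1 := Finset.sum_range_id_mul_two n
  have g2 := Finset.sum_range_id_mul_two (n+1)
  have g3 := Finset.sum_range_succ (fun i => i) n
  have g4 : n * (n + 1) / 2 = ∑ i ∈ range n, i + n := by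
    rw [← g3]
    simp only [Nat.add_sub_cancel] at g2
    rw [mul_comm n, ← g2]; simp
  rw [g4]
  have : ∑ i ∈ I, (i:ℕ) + n + (∑ i ∈ range n, i + n) = (∑ i ∈ I, (i:ℕ) + ∑ i ∈ range n, i) + 2 * n := by
    ring
  rw [this, pow_add _ _ (2 * n), pow_mul]
  simp

/-- the matrix obtained by selecting the left half in rows `I` -/
def lpW {R : Type*} [CommRing R] (n : ℕ) (α β : Fin n → ℕ) (x : Fin (2 * n) → R)
    (I : Finset (Fin (2 * n))) : Matrix (Fin (2 * n)) (Fin (2 * n)) R :=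
  Matrix.of fun i j : Fin (2 * n) =>
    if h : (j : ℕ) < n then (if i ∈ I then x i ^ α ⟨j, h⟩ else 0)
    else (if i ∈ I then 0 else x i ^ β ⟨(j : ℕ) - n, by have := j.2; omega⟩)

lemma altDet_expand {R : Type*} [CommRing R] (n : ℕ) (α β : Fin n → ℕ) (x a : Fin (2 * n) → R) :
    altDet n α β x a = ∑ I : Finset (Fin (2 * n)), (∏ i ∈ I, a i) * (lpW n α β x I).det := by
  have hadd := (Matrix.detRowAlternating (R := R) (n := Fin (2 * n))).map_add_univ
    (fun i j => if h : (j : ℕ) < n then a i * x i ^ α ⟨j, h⟩ else 0)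
    (fun i j => if h : (j : ℕ) < n then 0 else
      x i ^ β ⟨(j : ℕ) - n, by have := j.2; omega⟩)
  have e : altDet n α β x a = Matrix.detRowAlternating
    ((fun i (j : Fin (2 * n)) => if h : (j : ℕ) < n then a i * x i ^ α ⟨j, h⟩ else 0) +
    (fun i (j : Fin (2 * n)) => if h : (j : ℕ) < n then 0 else
      x i ^ β ⟨(j : ℕ) - n, by have := j.2; omega⟩) : Fin (2 * n) → Fin (2 * n) → R) := by
    unfold altDet
    change Matrix.det _ = Matrix.det _
    congr 1
    ext i j
    by_cases h : (j:ℕ) < n <;> simp [h]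
  rw [e, hadd]
  refine sum_congr rfl fun I _ => ?_
  have hM : (I.piecewise
      (fun i j => if h : (j : ℕ) < n then a i * x i ^ α ⟨j, h⟩ else 0)
      (fun i j => if h : (j : ℕ) < n then 0 else
        x i ^ β ⟨(j : ℕ) - n, by have := j.2; omega⟩) : Matrix (Fin (2 * n)) (Fin (2 * n)) R) =
      Matrix.of fun i j => (if i ∈ I then a i else 1) * lpW n α β x I i j := by
    ext i j
    simp only [Matrix.of_apply, lpW]
    by_cases hi : i ∈ I <;> by_cases h : (j:ℕ) < n <;> simp [h, hi]
  change Matrix.det _ = _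
  rw [hM, Matrix.det_mul_column, Finset.prod_ite_mem]
  simp

lemma lpW_det_ne {R : Type*} [CommRing R] (n : ℕ) (α β : Fin n → ℕ) (x : Fin (2 * n) → R)
    (I : Finset (Fin (2 * n))) (h : I.card ≠ n) : (lpW n α β x I).det = 0 := by
  rw [Matrix.det_apply]
  apply Finset.sum_eq_zero
  intro σ _
  suffices hz : ∃ j, lpW n α β x I (σ j) j = 0 by
    obtain ⟨j, hj⟩ := hz
    have hp : ∏ i, lpW n α β x I (σ i) i = 0 := Finset.prod_eq_zero (mem_univ j) hj
    rw [hp, smul_zero]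
  by_contra hne
  push Not at hne
  apply h
  have hiff : ∀ j, σ j ∈ I ↔ (j:ℕ) < n := by
    intro j
    have := hne j
    simp only [lpW, Matrix.of_apply] at this
    by_cases h1 : (j:ℕ) < n <;> by_cases h2 : σ j ∈ I <;> simp [h1, h2] at this ⊢
  have : I = (univ.map ((Function.Embedding.inl).trans (lpF n).toEmbedding)).map σ.toEmbedding := by
    ext i
    obtain ⟨j, rfl⟩ := σ.surjective i
    rw [hiff]
    simp only [mem_map, mem_univ, true_and, Equiv.coe_toEmbedding, exists_exists_eq_and,
      EmbeddingLike.apply_eq_iff_eq, Function.Embedding.trans_apply, Function.Embedding.inl_apply]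
    constructor
    · intro hj
      exact ⟨⟨j, hj⟩, by ext; simp [lpF_inl]⟩
    · rintro ⟨p, rfl⟩
      simp [lpF_inl]
  rw [this]
  simp

lemma lpW_det_eq {R : Type*} [CommRing R] (n : ℕ) (α β : Fin n → ℕ) (x : Fin (2 * n) → R)
    (I : Finset (Fin (2 * n))) (h : I.card = n) (h' : Iᶜ.card = n) :
    (lpW n α β x I).det = (-1) ^ ((∑ i ∈ I, ((i : ℕ) + 1)) + n * (n + 1) / 2) *
      (Matrix.of fun i j : Fin n => x (I.orderEmbOfFin h i) ^ α j).det *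
      (Matrix.of fun i j : Fin n => x (Iᶜ.orderEmbOfFin h' i) ^ β j).det := by
  have hs := lp_sign n I h h'
  set π := (lpF n).symm.trans (finSumEquivOfFinset h h') with hπ
  have hp := Matrix.det_permute π (lpW n α β x I)
  rw [hs] at hp
  have hb : ((lpW n α β x I).submatrix π id).submatrix (lpF n) (lpF n) = Matrix.fromBlocks
      (Matrix.of fun i j : Fin n => x (I.orderEmbOfFin h i) ^ α j) 0 0
      (Matrix.of fun i j : Fin n => x (Iᶜ.orderEmbOfFin h' i) ^ β j) := by
    have m1 : ∀ p, I.orderEmbOfFin h p ∈ I := fun p => orderEmbOfFin_mem _ _ _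
    have m2 : ∀ p, Iᶜ.orderEmbOfFin h' p ∉ I := fun p => mem_compl.1 (orderEmbOfFin_mem _ _ _)
    ext (u | u) (v | v) <;>
      simp [lpW, hπ, lpF_inl, lpF_inr, m1, m2]
  have hd := Matrix.det_submatrix_equiv_self (lpF n) ((lpW n α β x I).submatrix π id)
  rw [hb, Matrix.det_fromBlocks_zero₂₁, hp] at hd
  rw [mul_assoc, hd, ← mul_assoc]
  push_cast
  rw [← mul_pow]
  simp

/-- Proposition `Laplace`:
`U^n(X;A) = Σ_{I ⊆ [2n], |I| = n} (−1)^{Σ_{i∈I} i + n(n+1)/2} a_I ·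
  Π_{i<j ∈ I}(x_i − x_j)(1 + x_i x_j) · Π_{i<j ∈ Iᶜ}(x_i − x_j)(1 + x_i x_j)`,
with 1-indexed elements (so each `i ∈ I` contributes `i + 1` for 0-indexed `i`). -/
theorem Un_laplace (R : Type*) [CommRing R] (n : ℕ) (hn : 1 ≤ n)
    (x a : Fin (2 * n) → R) :
    Un n x a =
      ∑ I ∈ Finset.univ.powersetCard n (α := Fin (2 * n)),
        (-1 : R) ^ ((∑ i ∈ I, ((i : ℕ) + 1)) + n * (n + 1) / 2) *
          (∏ i ∈ I, a i) *
          (∏ i ∈ I, ∏ j ∈ I.filter (fun j => i < j), (x i - x j) * (1 + x i * x j)) *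
          (∏ i ∈ Iᶜ, ∏ j ∈ Iᶜ.filter (fun j => i < j), (x i - x j) * (1 + x i * x j)) := by
  have hL : ∀ (y : Fin n → R), ∑ l ∈ frobeniusSet n,
      Matrix.det (Matrix.of fun i j : Fin n => y i ^ ((l j : ℕ) + (n - 1 - (j : ℕ)))) =
      ∏ i, ∏ j ∈ Ioi i, ((y i - y j) * (1 + y i * y j)) := fun y => littlewood R n hn y
  unfold Un
  simp_rw [altDet_expand]
  have hswap : ∀ f : (Fin n → Fin n) → (Fin n → Fin n) → Finset (Fin (2 * n)) → R,
      ∑ lam ∈ frobeniusSet n, ∑ mu ∈ frobeniusSet n, ∑ I, f lam mu I =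
      ∑ I, ∑ lam ∈ frobeniusSet n, ∑ mu ∈ frobeniusSet n, f lam mu I := by
    intro f
    rw [Finset.sum_comm (s := univ)]
    refine sum_congr rfl fun lam _ => ?_
    exact Finset.sum_comm
  rw [hswap]
  symm
  apply Finset.sum_subset_zero_on_sdiff (subset_univ _)
  · intro I hI
    have hI' : I.card ≠ n := by simpa [mem_powersetCard] using hI
    simp [lpW_det_ne _ _ _ _ _ hI']
  · intro I hI
    have h : I.card = n := (mem_powersetCard.1 hI).2
    have h' : Iᶜ.card = n := by rw [card_compl, h, Fintype.card_fin]; omega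
    simp_rw [lpW_det_eq _ _ _ _ I h h']
    rw [← lp_prod2 I h (fun i j => (x i - x j) * (1 + x i * x j)),
      ← lp_prod2 Iᶜ h' (fun i j => (x i - x j) * (1 + x i * x j)),
      ← hL (fun p => x (I.orderEmbOfFin h p)), ← hL (fun p => x (Iᶜ.orderEmbOfFin h' p))]
    rw [mul_assoc, Finset.sum_mul_sum, Finset.mul_sum]
    refine sum_congr rfl fun l _ => ?_
    rw [Finset.mul_sum]
    refine sum_congr rfl fun m _ => ?_
    ring
end
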